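/- For every 1 < q < +∞ there exists a constant C_q > 0 such that for every divergence-free Schwartz vector field u : ℝ³ → ℝ³ (i.e. each component of u is a Schwartz function and ∇·u = 0), with strain tensor S, one has ‖∇u₃‖_{L^q} + ‖∂₃u‖_{L^q} ≤ C_q ‖2 S e₃‖_{L^q}. -/

import Mathlib

open MeasureTheory

noncomputable section

/-- The standard basis vectors of `EuclideanSpace ℝ (Fin 3)`. -/
def ee (i : Fin 3) : EuclideanSpace ℝ (Fin 3) := EuclideanSpace.single i 1

/-- The partial derivative `∂ᵢ uⱼ` of a vector field given by its three
(Schwartz) components. -/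
def pdW (u : Fin 3 → SchwartzMap (EuclideanSpace ℝ (Fin 3)) ℝ) (i j : Fin 3)
    (x : EuclideanSpace ℝ (Fin 3)) : ℝ :=
  fderiv ℝ (u j) x (ee i)

/-- View a triple of reals as a vector in `ℝ³` with the Euclidean norm. -/
def toE3 (f : Fin 3 → ℝ) : EuclideanSpace ℝ (Fin 3) :=
  (WithLp.equiv 2 (Fin 3 → ℝ)).symm f

/-- The strain tensor `S_ij = (∂ᵢ uⱼ + ∂ⱼ uᵢ)/2`. -/
def strainW (u : Fin 3 → SchwartzMap (EuclideanSpace ℝ (Fin 3)) ℝ)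
    (x : EuclideanSpace ℝ (Fin 3)) : Matrix (Fin 3) (Fin 3) ℝ :=
  Matrix.of fun i j => (pdW u i j x + pdW u j i x) / 2

/-!
Since `∑ i, ∂ᵢ uᵢ = 0`, the Laplacian `Δ uₖ = ∑ i, ∂ᵢ (∂ᵢ uₖ + ∂ₖ uᵢ)` is the divergence of
`2 S eₖ`, so the bound on `∇ uₖ` is the `L^q` boundedness of second order Riesz transforms, and the
bound on `∂ₖ u = 2 S eₖ - ∇ uₖ` follows. No singular integral is needed: if `Pₜ` is the heat
semigroup with generator `Δ / 2`, then integrating `d/dt ∫ (Pₜ ∂ᵥw) (Pₜ g)` in time gives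
`∫ (∂ᵥw) g = ∫₀^∞ ∫ (Pₜ Δw) (Pₜ ∂ᵥg)`, so by duality it suffices to have the bilinear embedding
`∫₀^∞ ∫ ‖∇ Pₜ f‖ ‖∇ Pₜ g‖ ≤ C ‖f‖_p ‖g‖_q` for conjugate `p` and `q`.

To prove the embedding, choose `1 < r < min p q` and a positive `h` with `|f| ≤ h ^ (r / p)`,
`|g| ≤ h ^ (r / q)` and `∫ h ^ r` under control. For `α = r / p`, the function
`x ^ 2 * w ^ (r - 2 * α) + K * w ^ r` is uniformly convex in `x` on the region `|x| ≤ w ^ α`, so its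
integral along the heat flow of `(f, h)` decreases. The total decrease, read off from the Jensen
gaps over short time steps, bounds `∫₀^∞ ∫ (Pₜ h) ^ (r - 2 * α) ‖∇ Pₜ f‖ ^ 2` by a multiple of
`∫ h ^ r`. Since `r / p + r / q = r`, the weight obtained for `g` is the inverse of the one for `f`,
and the Cauchy-Schwarz inequality concludes.
-/

namespace HeatFlow

open BoundedContinuousFunction Filter LineDeriv ProbabilityTheory Set Topology
open scoped ENNReal Laplacian NNReal RealInnerProductSpace SchwartzMap

variable {E : Type*} [NormedAddCommGroup E] [InnerProductSpace ℝ E] [FiniteDimensional ℝ E]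
  [MeasurableSpace E] [BorelSpace E]

section Density

variable {V : Type*} [NormedAddCommGroup V] [InnerProductSpace ℝ V]

/-- The density of the standard Gaussian measure with respect to Lebesgue measure. -/
def gaussianDensity (z : V) : ℝ :=
  (2 * Real.pi) ^ (-(Module.finrank ℝ V / 2 : ℝ)) * Real.exp (-(1 / 2) * ‖z‖ ^ 2)

lemma gaussianDensity_pos (z : V) : 0 < gaussianDensity z := by
  unfold gaussianDensity; positivity

lemma norm_gaussianDensity_le (x : V) : ‖gaussianDensity x‖ ≤ gaussianDensity (0 : V) := by
  rw [Real.norm_of_nonneg (gaussianDensity_pos x).le]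
  refine mul_le_mul_of_nonneg_left (Real.exp_le_exp.2 ?_) (by positivity)
  simp

lemma continuous_gaussianDensity : Continuous (gaussianDensity (V := V)) := by
  unfold gaussianDensity; fun_prop

lemma hasFDerivAt_gaussianDensity (z : V) :
    HasFDerivAt gaussianDensity (-(gaussianDensity z • innerSL ℝ z)) z := by
  have h := (((hasStrictFDerivAt_norm_sq z).hasFDerivAt.const_mul (-(1 / 2))).exp).const_mul
    ((2 * Real.pi) ^ (-(Module.finrank ℝ V / 2 : ℝ)))
  refine h.congr_fderiv ?_
  ext v
  simp [gaussianDensity]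
  ring

end Density

lemma map_add_smul_stdGaussian (a b : ℝ) :
    ((stdGaussian E).prod (stdGaussian E)).map (fun z ↦ a • z.1 + b • z.2) =
      (stdGaussian E).map (√(a ^ 2 + b ^ 2) • ·) := by
  have (c : ℝ) : IsProbabilityMeasure ((stdGaussian E).map (c • ·)) :=
    Measure.isProbabilityMeasure_map (by fun_prop)
  have hconv : ((stdGaussian E).prod (stdGaussian E)).map (fun z ↦ a • z.1 + b • z.2) =
      ((stdGaussian E).map (a • ·)).conv ((stdGaussian E).map (b • ·)) := by
    rw [Measure.conv, Measure.map_prod_map _ _ (by fun_prop) (by fun_prop),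
      Measure.map_map (by fun_prop) (by fun_prop)]
    rfl
  rw [hconv]
  refine Measure.ext_of_charFun (funext fun y ↦ ?_)
  rw [charFun_conv]
  simp only [charFun_map_smul, charFun_stdGaussian, ← Complex.exp_add, norm_smul, Real.norm_eq_abs]
  congr 1
  norm_cast
  simp only [mul_pow, sq_abs, Real.sq_sqrt (add_nonneg (sq_nonneg a) (sq_nonneg b))]
  ring

lemma integral_integral_add_smul_stdGaussian (f : E →ᵇ ℝ) (a b : ℝ) :
    ∫ z, ∫ z', f (a • z + b • z') ∂stdGaussian E ∂stdGaussian E =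
      ∫ z, f (√(a ^ 2 + b ^ 2) • z) ∂stdGaussian E := by
  have hint : Integrable (fun z : E × E ↦ f (a • z.1 + b • z.2))
      ((stdGaussian E).prod (stdGaussian E)) :=
    (f.compContinuous ⟨fun z : E × E ↦ a • z.1 + b • z.2, by fun_prop⟩).integrable _
  have hf {μ : Measure E} : AEStronglyMeasurable f μ := f.continuous.aestronglyMeasurable
  rw [← integral_prod _ hint, ← integral_map (φ := fun z : E × E ↦ a • z.1 + b • z.2)
    (by fun_prop) hf, map_add_smul_stdGaussian, integral_map (by fun_prop) hf]

lemma map_neg_stdGaussian : (stdGaussian E).map (fun z ↦ -z) = stdGaussian E :=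
  stdGaussian_map (LinearIsometryEquiv.neg ℝ)

lemma integrable_gaussianDensity : Integrable (gaussianDensity (V := E)) := by
  have h := (GaussianFourier.integrable_cexp_neg_mul_sq_norm_add (V := E) (b := 1 / 2)
    (by norm_num) 0 0).norm
  refine Integrable.const_mul (h.congr (.of_forall fun z ↦ ?_)) _
  simp [Complex.norm_exp, ← Complex.ofReal_pow]

lemma stdGaussian_eq_withDensity :
    stdGaussian E = volume.withDensity fun z ↦ ENNReal.ofReal (gaussianDensity z) := by
  have : IsFiniteMeasure (volume.withDensity fun z : E ↦ ENNReal.ofReal (gaussianDensity z)) :=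
    isFiniteMeasure_withDensity_ofReal integrable_gaussianDensity.2
  refine Measure.ext_of_charFun (funext fun a ↦ ?_)
  set c : ℝ := (2 * Real.pi) ^ (-(Module.finrank ℝ E / 2 : ℝ)) with hc
  have hdens (x : E) : (ENNReal.ofReal (gaussianDensity x)).toReal •
      Complex.exp (⟪x, a⟫ * Complex.I) =
        c * Complex.exp (-(1 / 2) * ‖x‖ ^ 2 + Complex.I * ⟪a, x⟫) := by
    rw [ENNReal.toReal_ofReal (gaussianDensity_pos x).le, gaussianDensity, Complex.exp_add,
      real_inner_comm, mul_comm Complex.I, Complex.real_smul]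
    push_cast
    ring
  have hconst : (Real.pi / (1 / 2) : ℂ) ^ (Module.finrank ℝ E / 2 : ℂ) =
      ((2 * Real.pi) ^ (Module.finrank ℝ E / 2 : ℝ) : ℝ) := by
    rw [Complex.ofReal_cpow (by positivity)]
    push_cast
    congr 1
    ring
  rw [charFun_stdGaussian, charFun_apply, integral_withDensity_eq_integral_toReal_smul
    continuous_gaussianDensity.measurable.ennreal_ofReal (by simp)]
  simp_rw [hdens]
  rw [integral_const_mul, GaussianFourier.integral_cexp_neg_mul_sq_norm_add (by norm_num), hconst,
    ← mul_assoc, ← Complex.ofReal_mul, hc, ← Real.rpow_add (by positivity)]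
  simp
  ring_nf

lemma lintegral_ofReal_gaussianDensity : ∫⁻ x : E, ENNReal.ofReal (gaussianDensity x) = 1 := by
  rw [← setLIntegral_univ, ← withDensity_apply _ .univ, ← stdGaussian_eq_withDensity,
    measure_univ]

lemma integral_stdGaussian (f : E → ℝ) :
    ∫ z, f z ∂stdGaussian E = ∫ z, gaussianDensity z * f z := by
  rw [stdGaussian_eq_withDensity, integral_withDensity_eq_integral_toReal_smul
    continuous_gaussianDensity.measurable.ennreal_ofReal (by simp)]
  simp_rw [ENNReal.toReal_ofReal (gaussianDensity_pos _).le, smul_eq_mul]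

lemma integrable_stdGaussian_iff {f : E → ℝ} :
    Integrable f (stdGaussian E) ↔ Integrable fun z ↦ gaussianDensity z * f z := by
  rw [stdGaussian_eq_withDensity, integrable_withDensity_iff_integrable_smul'
    continuous_gaussianDensity.measurable.ennreal_ofReal (by simp)]
  simp_rw [ENNReal.toReal_ofReal (gaussianDensity_pos _).le, smul_eq_mul]

lemma integral_inner_mul_stdGaussian {f : E → ℝ} (v : E) (hf : Differentiable ℝ f)
    (hf_int : Integrable f (stdGaussian E))
    (hfderiv_int : Integrable (fderiv ℝ f · v) (stdGaussian E))
    (hmul_int : Integrable (fun z ↦ ⟪z, v⟫ * f z) (stdGaussian E)) :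
    ∫ z, ⟪z, v⟫ * f z ∂stdGaussian E = ∫ z, fderiv ℝ f z v ∂stdGaussian E := by
  have hderiv (z : E) :
      fderiv ℝ gaussianDensity z v * f z = -(gaussianDensity z * (⟪z, v⟫ * f z)) := by
    simp [(hasFDerivAt_gaussianDensity z).fderiv, mul_assoc]
  rw [integral_stdGaussian, integral_stdGaussian,
    integral_mul_fderiv_eq_neg_fderiv_mul_of_integrable ?_
      (integrable_stdGaussian_iff.1 hfderiv_int) (integrable_stdGaussian_iff.1 hf_int)
      (fun z _ ↦ (hasFDerivAt_gaussianDensity z).differentiableAt) (fun z _ ↦ hf z)]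
  · simp_rw [hderiv, integral_neg, neg_neg]
  · simp_rw [hderiv]
    exact (integrable_stdGaussian_iff.1 hmul_int).neg

lemma integrable_norm_stdGaussian : Integrable (fun z : E ↦ ‖z‖) (stdGaussian E) :=
  IsGaussian.integrable_id.norm

variable {F : Type*} [FunLike F E ℝ] [BoundedContinuousMapClass F E ℝ]

lemma integrable_comp_add_smul (f : F) (s : ℝ) (x : E) :
    Integrable (fun z ↦ f (x + s • z)) (stdGaussian E) :=
  ((f : E →ᵇ ℝ).compContinuous ⟨fun z ↦ x + s • z, by fun_prop⟩).integrable _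

lemma continuous_integral_comp_add_smul (f : F) :
    Continuous fun p : ℝ × E ↦ ∫ z, f (p.2 + √p.1 • z) ∂stdGaussian E :=
  continuous_of_dominated (bound := fun _ ↦ ‖(f : E →ᵇ ℝ)‖)
    (fun _ ↦ (integrable_comp_add_smul f _ _).aestronglyMeasurable)
    (fun _ ↦ .of_forall fun _ ↦ (f : E →ᵇ ℝ).norm_coe_le_norm _) (integrable_const _)
    (.of_forall fun _ ↦ by fun_prop)

/-- The heat semigroup at time `t`, with generator `Δ / 2`, in its probabilistic form: the value at
`x` is the average of `f` over a Gaussian variable of mean `x` and covariance `t`. -/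
def heat (t : ℝ) (f : F) : E →ᵇ ℝ :=
  .ofNormedAddCommGroup (fun x ↦ ∫ z, f (x + √t • z) ∂stdGaussian E)
    ((continuous_integral_comp_add_smul f).comp (by fun_prop : Continuous fun x ↦ (t, x)))
    ‖(f : E →ᵇ ℝ)‖ fun x ↦ by
      simpa using norm_integral_le_of_norm_le_const (μ := stdGaussian E)
        (.of_forall fun z ↦ (f : E →ᵇ ℝ).norm_coe_le_norm (x + √t • z))

lemma heat_apply (t : ℝ) (f : F) (x : E) :
    heat t f x = ∫ z, f (x + √t • z) ∂stdGaussian E := rfl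

@[fun_prop]
lemma continuous_heat_comp {X : Type*} [TopologicalSpace X] (f : F) {τ : X → ℝ} {ξ : X → E}
    (hτ : Continuous τ) (hξ : Continuous ξ) : Continuous fun p ↦ heat (τ p) f (ξ p) :=
  (continuous_integral_comp_add_smul f).comp (hτ.prodMk hξ)

lemma abs_heat_le (t : ℝ) (f : F) (x : E) : |heat t f x| ≤ ‖(f : E →ᵇ ℝ)‖ :=
  ((heat t f).norm_coe_le_norm x).trans (norm_ofNormedAddCommGroup_le _ (norm_nonneg _) _)

lemma heat_zero (f : F) : heat 0 f = (f : E →ᵇ ℝ) := by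
  ext x; simp [heat_apply]

lemma heat_heat {s t : ℝ} (hs : 0 ≤ s) (ht : 0 ≤ t) (f : F) :
    heat s (heat t f) = heat (s + t) f := by
  ext x
  have h := integral_integral_add_smul_stdGaussian
    ((f : E →ᵇ ℝ).compContinuous ⟨fun y ↦ x + y, by fun_prop⟩) √s √t
  simpa [heat_apply, Real.sq_sqrt, hs, ht, add_assoc] using h

lemma integrable_prod_comp_add_smul {g : F} (hg : Integrable g) (s : ℝ) :
    Integrable (fun p : E × E ↦ g (p.1 + s • p.2)) (volume.prod (stdGaussian E)) := by
  have hmeas : AEStronglyMeasurable (fun p : E × E ↦ g (p.1 + s • p.2))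
      (volume.prod (stdGaussian E)) := Continuous.aestronglyMeasurable (by fun_prop)
  refine (integrable_prod_iff' hmeas).2 ⟨.of_forall fun z ↦ hg.comp_add_right (s • z), ?_⟩
  exact (integrable_const (∫ x, ‖g x‖)).congr
    (.of_forall fun z ↦ (integral_add_right_eq_self (fun x ↦ ‖g x‖) (s • z)).symm)

lemma integrable_heat {g : F} (hg : Integrable g) (t : ℝ) : Integrable (heat t g) :=
  (integrable_prod_comp_add_smul hg √t).integral_prod_left

lemma heat_apply_sub (t : ℝ) (f : F) (x : E) :
    heat t f x = ∫ z, f (x - √t • z) ∂stdGaussian E := by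
  rw [heat_apply, ← map_neg_stdGaussian, integral_map (by fun_prop)
    (Continuous.aestronglyMeasurable (by fun_prop)), map_neg_stdGaussian]
  simp [sub_eq_add_neg]

lemma integral_heat_mul {G : Type*} [FunLike G E ℝ] [BoundedContinuousMapClass G E ℝ] (f : F)
    {g : G} (hg : Integrable g) (t : ℝ) :
    ∫ x, heat t f x * g x = ∫ x, f x * heat t g x := by
  have htranslate (z : E) : ∫ x, f (x + √t • z) * g x = ∫ x, f x * g (x - √t • z) := by
    simp [← integral_add_right_eq_self (fun x ↦ f x * g (x - √t • z)) (√t • z)]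
  have hint₁ : Integrable (fun p : E × E ↦ f (p.1 + √t • p.2) * g p.1)
      (volume.prod (stdGaussian E)) :=
    (hg.comp_fst _).bdd_mul (Continuous.aestronglyMeasurable (by fun_prop))
      (.of_forall fun p ↦ (f : E →ᵇ ℝ).norm_coe_le_norm _)
  have hint₂ : Integrable (fun p : E × E ↦ f p.1 * g (p.1 - √t • p.2))
      (volume.prod (stdGaussian E)) := by
    simpa [sub_eq_add_neg] using (integrable_prod_comp_add_smul hg (-√t)).bdd_mul
      (f := fun p : E × E ↦ f p.1) (Continuous.aestronglyMeasurable (by fun_prop))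
      (.of_forall fun p ↦ (f : E →ᵇ ℝ).norm_coe_le_norm _)
  calc ∫ x, heat t f x * g x
      = ∫ x, ∫ z, f (x + √t • z) * g x ∂stdGaussian E := by
        simp_rw [heat_apply, integral_mul_const]
    _ = ∫ z, ∫ x, f (x + √t • z) * g x ∂volume ∂stdGaussian E := integral_integral_swap hint₁
    _ = ∫ z, ∫ x, f x * g (x - √t • z) ∂volume ∂stdGaussian E := by simp_rw [htranslate]
    _ = ∫ x, ∫ z, f x * g (x - √t • z) ∂stdGaussian E := (integral_integral_swap hint₂).symm
    _ = ∫ x, f x * heat t g x := by simp_rw [heat_apply_sub, integral_const_mul]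

section Schwartz

variable {V : Type*} [NormedAddCommGroup V] [NormedSpace ℝ V]

lemma exists_norm_fderiv_le (f : 𝓢(V, ℝ)) : ∃ C, ∀ x, ‖fderiv ℝ f x‖ ≤ C :=
  ⟨_, fun x ↦ (SchwartzMap.fderivCLM ℝ V ℝ f : V →ᵇ V →L[ℝ] ℝ).norm_coe_le_norm x⟩

lemma continuous_fderiv (f : 𝓢(V, ℝ)) : Continuous (fderiv ℝ f) :=
  (SchwartzMap.fderivCLM ℝ V ℝ f).continuous

lemma lineDerivOp_comm (f : 𝓢(V, ℝ)) (v w : V) : ∂_{v} (∂_{w} f) = ∂_{w} (∂_{v} f) := by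
  ext x
  have hsecond (v w : V) : (∂_{v} (∂_{w} f)) x = fderiv ℝ (fderiv ℝ f) x v w := by
    have h := ((SchwartzMap.fderivCLM ℝ V ℝ f).hasFDerivAt x).clm_apply (hasFDerivAt_const w x)
    exact (congrArg (· v) h.fderiv).trans (by simp; rfl)
  rw [hsecond, hsecond]
  exact (f.smooth 2).contDiffAt.isSymmSndFDerivAt (by simp) v w

end Schwartz

lemma laplacian_lineDerivOp {V : Type*} [NormedAddCommGroup V] [InnerProductSpace ℝ V]
    [FiniteDimensional ℝ V] (f : 𝓢(V, ℝ)) (v : V) : Δ (∂_{v} f) = ∂_{v} (Δ f) := by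
  let b := stdOrthonormalBasis ℝ V
  rw [SchwartzMap.laplacian_eq_sum b, SchwartzMap.laplacian_eq_sum b, lineDerivOp_sum]
  simp only [lineDerivOp_comm _ v]

lemma integrable_fderiv_comp_add_smul (f : 𝓢(E, ℝ)) (s : ℝ) (x : E) :
    Integrable (fun z ↦ fderiv ℝ f (x + s • z)) (stdGaussian E) :=
  ((SchwartzMap.fderivCLM ℝ E ℝ f : E →ᵇ E →L[ℝ] ℝ).compContinuous
    ⟨fun z ↦ x + s • z, by fun_prop⟩).integrable _

lemma hasFDerivAt_heat (f : 𝓢(E, ℝ)) (t : ℝ) (x : E) :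
    HasFDerivAt (heat t f) (∫ z, fderiv ℝ f (x + √t • z) ∂stdGaussian E) x := by
  obtain ⟨C, hC⟩ := exists_norm_fderiv_le f
  refine hasFDerivAt_integral_of_dominated_of_fderiv_le (F := fun x z ↦ f (x + √t • z))
    (F' := fun x z ↦ fderiv ℝ f (x + √t • z)) (bound := fun _ ↦ C) (s := univ) univ_mem
    (.of_forall fun y ↦ (integrable_comp_add_smul f √t y).aestronglyMeasurable)
    (integrable_comp_add_smul f √t x)
    (integrable_fderiv_comp_add_smul f √t x).aestronglyMeasurable
    (.of_forall fun z y _ ↦ hC _) (integrable_const C) (.of_forall fun z y _ ↦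
      (hasFDerivAt_comp_add_right _).2 (f.hasFDerivAt (y + √t • z)))

lemma differentiable_heat (f : 𝓢(E, ℝ)) (t : ℝ) : Differentiable ℝ (heat t f) :=
  fun x ↦ (hasFDerivAt_heat f t x).differentiableAt

lemma fderiv_heat_apply (f : 𝓢(E, ℝ)) (t : ℝ) (x v : E) :
    fderiv ℝ (heat t f) x v = heat t (∂_{v} f) x := by
  rw [(hasFDerivAt_heat f t x).fderiv,
    ContinuousLinearMap.integral_apply (integrable_fderiv_comp_add_smul f √t x)]
  rfl

lemma integrable_inner_mul_comp_add_smul (f : 𝓢(E, ℝ)) (s : ℝ) (x v : E) :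
    Integrable (fun z ↦ ⟪z, v⟫ * f (x + s • z)) (stdGaussian E) :=
  (integrable_norm_stdGaussian.mul_const ‖v‖).mono' (by fun_prop)
    (.of_forall fun z ↦ norm_inner_le_norm z v) |>.mul_bdd
    (integrable_comp_add_smul f s x).aestronglyMeasurable
    (.of_forall fun z ↦ (f : E →ᵇ ℝ).norm_coe_le_norm _)

lemma integral_inner_mul_comp_add_smul (f : 𝓢(E, ℝ)) (t : ℝ) (x v : E) :
    ∫ z, ⟪z, v⟫ * f (x + √t • z) ∂stdGaussian E = √t * heat t (∂_{v} f) x := by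
  have hfderiv (z : E) : HasFDerivAt (fun z ↦ f (x + √t • z)) (√t • fderiv ℝ f (x + √t • z)) z :=
    ((f.hasFDerivAt (x + √t • z)).comp z
      (((hasFDerivAt_id z).const_smul √t).const_add x)).congr_fderiv (by ext; simp)
  have hderiv (z : E) : fderiv ℝ (fun z ↦ f (x + √t • z)) z v = √t * (∂_{v} f) (x + √t • z) := by
    rw [(hfderiv z).fderiv]; rfl
  rw [integral_inner_mul_stdGaussian v (fun z ↦ (hfderiv z).differentiableAt)
    (integrable_comp_add_smul f √t x) _ (integrable_inner_mul_comp_add_smul f √t x v)]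
  · simp_rw [hderiv]
    exact integral_const_mul _ _
  · simp_rw [hderiv]
    exact (integrable_comp_add_smul (∂_{v} f) √t x).const_mul _

lemma exists_abs_heat_lineDerivOp_le (f : 𝓢(E, ℝ)) (v : E) :
    ∃ C, ∀ t > 0, ∀ x, |heat t (∂_{v} f) x| ≤ C / √t := by
  refine ⟨∫ z : E, ‖z‖ * ‖v‖ * ‖(f : E →ᵇ ℝ)‖ ∂stdGaussian E, fun t ht x ↦ ?_⟩
  have hs : 0 < √t := Real.sqrt_pos.2 ht
  have habs : |heat t (∂_{v} f) x| * √t = ‖∫ z, ⟪z, v⟫ * f (x + √t • z) ∂stdGaussian E‖ := by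
    rw [integral_inner_mul_comp_add_smul, Real.norm_eq_abs, abs_mul, abs_of_pos hs, mul_comm]
  rw [le_div_iff₀ hs, habs]
  refine norm_integral_le_of_norm_le
    ((integrable_norm_stdGaussian.mul_const _).mul_const _) (.of_forall fun z ↦ ?_)
  rw [norm_mul]
  exact mul_le_mul (norm_inner_le_norm z v) ((f : E →ᵇ ℝ).norm_coe_le_norm _) (norm_nonneg _)
    (by positivity)

lemma integral_fderiv_comp_add_smul_apply_self (f : 𝓢(E, ℝ)) (t : ℝ) (x : E) :
    ∫ z, fderiv ℝ f (x + √t • z) z ∂stdGaussian E = √t * heat t (Δ f) x := by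
  let b := stdOrthonormalBasis ℝ E
  have hexpand (z : E) :
      fderiv ℝ f (x + √t • z) z = ∑ i, ⟪z, b i⟫ * (∂_{b i} f) (x + √t • z) := by
    conv_lhs => enter [2]; rw [← b.sum_repr' z]
    simp [SchwartzMap.lineDerivOp_apply_eq_fderiv, real_inner_comm]
  have hlap : heat t (Δ f) x = ∑ i, heat t (∂_{b i} (∂_{b i} f)) x := by
    simp only [heat_apply, SchwartzMap.laplacian_eq_sum b f]
    rw [← integral_finsetSum _ fun i _ ↦ integrable_comp_add_smul (∂_{b i} (∂_{b i} f)) √t x]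
    simp
  simp_rw [hexpand]
  rw [integral_finsetSum _ fun i _ ↦ integrable_inner_mul_comp_add_smul (∂_{b i} f) √t x (b i),
    hlap, Finset.mul_sum]
  exact Finset.sum_congr rfl fun i _ ↦ integral_inner_mul_comp_add_smul _ _ _ _

lemma hasDerivAt_integral_comp_add_smul (f : 𝓢(E, ℝ)) (s : ℝ) (x : E) :
    HasDerivAt (fun s ↦ ∫ z, f (x + s • z) ∂stdGaussian E)
      (∫ z, fderiv ℝ f (x + s • z) z ∂stdGaussian E) s := by
  obtain ⟨C, hC⟩ := exists_norm_fderiv_le f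
  refine (hasDerivAt_integral_of_dominated_loc_of_deriv_le (F := fun s z ↦ f (x + s • z))
    (F' := fun s z ↦ fderiv ℝ f (x + s • z) z) (bound := fun z ↦ C * ‖z‖) (s := univ) univ_mem
    (.of_forall fun r ↦ (integrable_comp_add_smul f r x).aestronglyMeasurable)
    (integrable_comp_add_smul f s x)
    (((continuous_fderiv f).comp (by fun_prop)).clm_apply continuous_id).aestronglyMeasurable
    (.of_forall fun z r _ ↦ (fderiv ℝ f (x + r • z)).le_of_opNorm_le (hC _) z)
    (integrable_norm_stdGaussian.const_mul C) (.of_forall fun z r _ ↦ ?_)).2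
  have hline : HasDerivAt (fun r : ℝ ↦ x + r • z) z r := by
    simpa using ((hasDerivAt_id r).smul_const z).const_add x
  exact (f.hasFDerivAt (x + r • z)).comp_hasDerivAt r hline

lemma hasDerivAt_heat (f : 𝓢(E, ℝ)) {t : ℝ} (ht : 0 < t) (x : E) :
    HasDerivAt (fun t ↦ heat t f x) (heat t (Δ f) x / 2) t := by
  have hs : √t ≠ 0 := (Real.sqrt_pos.2 ht).ne'
  refine ((hasDerivAt_integral_comp_add_smul f √t x).comp t
    (Real.hasDerivAt_sqrt ht.ne')).congr_deriv ?_
  rw [integral_fderiv_comp_add_smul_apply_self]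
  field_simp

lemma integrable_heat_mul_heat (f g : 𝓢(E, ℝ)) (s t : ℝ) :
    Integrable fun x ↦ heat s f x * heat t g x :=
  (integrable_heat g.integrable t).bdd_mul (heat s f).continuous.aestronglyMeasurable
    (.of_forall (heat s f).norm_coe_le_norm)

lemma integral_heat_laplacian_lineDerivOp_mul (w g : 𝓢(E, ℝ)) (v : E) {t : ℝ} (ht : 0 ≤ t) :
    ∫ x, heat (2 * t) (Δ (∂_{v} w)) x * g x =
      -∫ x, heat t (Δ w) x * heat t (∂_{v} g) x := by
  rw [two_mul, ← heat_heat ht ht, integral_heat_mul _ g.integrable, laplacian_lineDerivOp]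
  simp_rw [← fderiv_heat_apply]
  rw [integral_mul_fderiv_eq_neg_fderiv_mul_of_integrable, neg_neg]
  · simp_rw [fderiv_heat_apply]; exact integrable_heat_mul_heat _ _ _ _
  · simp_rw [fderiv_heat_apply]; exact integrable_heat_mul_heat _ _ _ _
  · exact integrable_heat_mul_heat _ _ _ _
  · exact fun x _ ↦ differentiable_heat _ _ x
  · exact fun x _ ↦ differentiable_heat _ _ x

lemma integral_heat_two_mul_laplacian (f : 𝓢(E, ℝ)) {T : ℝ} (hT : 0 ≤ T) (x : E) :
    ∫ t in 0..T, heat (2 * t) (Δ f) x = heat (2 * T) f x - f x := by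
  have hzero : f x = heat (2 * 0) f x := by rw [mul_zero, heat_zero]; rfl
  rw [hzero]
  refine intervalIntegral.integral_eq_sub_of_hasDerivAt_of_le hT
    (f := fun t ↦ heat (2 * t) f x) (by fun_prop) (fun t ht ↦ ?_)
    (Continuous.intervalIntegrable (by fun_prop) _ _)
  refine ((hasDerivAt_heat f (mul_pos two_pos ht.1) x).comp t
    ((hasDerivAt_id t).const_mul 2)).congr_deriv ?_
  ring

lemma integral_lineDerivOp_mul_eq (w g : 𝓢(E, ℝ)) (v : E) {T : ℝ} (hT : 0 ≤ T) :
    ∫ x, ∂_{v} w x * g x = (∫ x, heat (2 * T) (∂_{v} w) x * g x) +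
      ∫ t in 0..T, ∫ x, heat t (Δ w) x * heat t (∂_{v} g) x := by
  have hint : Integrable (fun p : ℝ × E ↦ heat (2 * p.1) (Δ (∂_{v} w)) p.2 * g p.2)
      ((volume.restrict (Ioc 0 T)).prod volume) :=
    (g.integrable.comp_snd _).bdd_mul (Continuous.aestronglyMeasurable (by fun_prop))
      (.of_forall fun p ↦ abs_heat_le _ _ _)
  have hint_heat : Integrable fun x ↦ heat (2 * T) (∂_{v} w) x * g x :=
    g.integrable.bdd_mul (Continuous.aestronglyMeasurable (by fun_prop))
      (.of_forall fun x ↦ abs_heat_le _ _ _)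
  have hint_self : Integrable fun x ↦ ∂_{v} w x * g x :=
    g.integrable.bdd_mul (∂_{v} w).continuous.aestronglyMeasurable
      (.of_forall (SchwartzMap.norm_le_seminorm ℝ (∂_{v} w)))
  have htime (x : E) : ∫ t in Ioc 0 T, heat (2 * t) (Δ (∂_{v} w)) x * g x =
      heat (2 * T) (∂_{v} w) x * g x - ∂_{v} w x * g x := by
    rw [integral_mul_const, ← intervalIntegral.integral_of_le hT,
      integral_heat_two_mul_laplacian _ hT]
    ring
  have hspace : ∫ t in 0..T, ∫ x, heat t (Δ w) x * heat t (∂_{v} g) x =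
      -∫ t in 0..T, ∫ x, heat (2 * t) (Δ (∂_{v} w)) x * g x := by
    rw [← intervalIntegral.integral_neg]
    refine intervalIntegral.integral_congr fun t ht ↦ ?_
    rw [uIcc_of_le hT] at ht
    rw [integral_heat_laplacian_lineDerivOp_mul w g v ht.1, neg_neg]
  rw [hspace, intervalIntegral.integral_of_le hT, integral_integral_swap hint]
  simp_rw [htime]
  rw [integral_sub hint_heat hint_self]
  simp

lemma tendsto_integral_heat_lineDerivOp_mul (w g : 𝓢(E, ℝ)) (v : E) :
    Tendsto (fun T ↦ ∫ x, heat (2 * T) (∂_{v} w) x * g x) atTop (𝓝 0) := by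
  obtain ⟨C, hC⟩ := exists_abs_heat_lineDerivOp_le w v
  have hbound : ∀ᶠ T : ℝ in atTop, ‖∫ x, heat (2 * T) (∂_{v} w) x * g x‖ ≤
      C / √(2 * T) * ∫ x, ‖g x‖ := by
    filter_upwards [eventually_gt_atTop 0] with T hT
    rw [← integral_const_mul]
    refine norm_integral_le_of_norm_le (g.integrable.norm.const_mul _) (.of_forall fun x ↦ ?_)
    rw [norm_mul]
    exact mul_le_mul_of_nonneg_right (hC _ (by positivity) x) (norm_nonneg _)
  have hlim : Tendsto (fun T : ℝ ↦ C / √(2 * T) * ∫ x, ‖g x‖) atTop (𝓝 (0 * ∫ x, ‖g x‖)) :=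
    (tendsto_const_nhds.div_atTop (Real.tendsto_sqrt_atTop.comp
      (tendsto_id.const_mul_atTop two_pos))).mul_const _
  rw [zero_mul] at hlim
  exact squeeze_zero_norm' hbound hlim

lemma enorm_integral_lineDerivOp_mul_le (w g : 𝓢(E, ℝ)) (v : E) {R : ℝ≥0∞}
    (hR : ∀ T > 0, ∫⁻ t in Ioc 0 T, ∫⁻ x, ‖heat t (Δ w) x * heat t (∂_{v} g) x‖ₑ ≤ R) :
    ‖∫ x, ∂_{v} w x * g x‖ₑ ≤ R := by
  have hlim : Tendsto
      (fun T ↦ ‖(∫ x, ∂_{v} w x * g x) - ∫ x, heat (2 * T) (∂_{v} w) x * g x‖ₑ) atTop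
      (𝓝 ‖∫ x, ∂_{v} w x * g x‖ₑ) := by
    simpa using ((tendsto_integral_heat_lineDerivOp_mul w g v).const_sub
      (∫ x, ∂_{v} w x * g x)).enorm
  refine le_of_tendsto hlim ?_
  filter_upwards [eventually_gt_atTop 0] with T hT
  rw [integral_lineDerivOp_mul_eq w g v hT.le, add_sub_cancel_left,
    intervalIntegral.integral_of_le hT.le]
  exact (enorm_integral_le_lintegral_enorm _).trans <|
    (lintegral_mono fun t ↦ enorm_integral_le_lintegral_enorm _).trans (hR T hT)

lemma add_half_le_of_le_deriv_deriv {f f' f'' : ℝ → ℝ} {c : ℝ}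
    (hf : ∀ θ ∈ Icc 0 1, HasDerivAt f (f' θ) θ) (hf' : ∀ θ ∈ Icc 0 1, HasDerivAt f' (f'' θ) θ)
    (hc : ∀ θ ∈ Icc 0 1, c ≤ f'' θ) : f 0 + f' 0 + c / 2 ≤ f 1 := by
  have hg (θ : ℝ) (hθ : θ ∈ Icc 0 1) :
      HasDerivAt (fun θ ↦ f θ - c / 2 * θ ^ 2) (f' θ - c * θ) θ :=
    ((hf θ hθ).sub ((hasDerivAt_pow 2 θ).const_mul (c / 2))).congr_deriv (by norm_num; ring)
  have hg' (θ : ℝ) (hθ : θ ∈ Icc 0 1) : HasDerivAt (fun θ ↦ f' θ - c * θ) (f'' θ - c) θ :=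
    ((hf' θ hθ).sub ((hasDerivAt_id θ).const_mul c)).congr_deriv (by simp)
  have hconv : ConvexOn ℝ (Icc 0 1) fun θ ↦ f θ - c / 2 * θ ^ 2 :=
    convexOn_of_hasDerivWithinAt2_nonneg (convex_Icc 0 1)
      (fun θ hθ ↦ (hg θ hθ).continuousAt.continuousWithinAt)
      (fun θ hθ ↦ (hg θ (interior_subset hθ)).hasDerivWithinAt)
      (fun θ hθ ↦ (hg' θ (interior_subset hθ)).hasDerivWithinAt)
      (fun θ hθ ↦ sub_nonneg.2 (hc θ (interior_subset hθ)))
  have hslope := hconv.le_slope_of_hasDerivAt (by simp) (by simp) one_pos (hg 0 (by simp))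
  simp only [slope_def_field] at hslope
  linarith

lemma min_rpow_le_rpow {a b w : ℝ} (k : ℝ) (ha : 0 < a) (haw : a ≤ w) (hwb : w ≤ b) :
    min (a ^ k) (b ^ k) ≤ w ^ k := by
  obtain hk | hk := le_total 0 k
  · exact min_le_of_left_le (Real.rpow_le_rpow ha.le haw hk)
  · exact min_le_of_right_le (Real.rpow_le_rpow_of_nonpos (ha.trans_le haw) hwb hk)

section Bellman

variable {α r x w : ℝ}

/-- The multiple of `w ^ r` which makes `bellman α r` convex on the region `|x| ≤ w ^ α`. -/
def bellmanConst (α r : ℝ) : ℝ :=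
  (4 * (r - 2 * α) ^ 2 + |(r - 2 * α) * (r - 2 * α - 1)|) / (r * (r - 1))

/-- A Bellman function for the square function of a solution `x` of the heat equation dominated by
a power `w ^ α` of a positive solution `w`: on the region `|x| ≤ w ^ α` it is comparable with
`w ^ r`, and it is convex there, the second derivative in `x` being at least `w ^ (r - 2 * α)`. -/
def bellman (α r x w : ℝ) : ℝ := x ^ 2 * w ^ (r - 2 * α) + bellmanConst α r * w ^ r

/-- The derivative of `bellman α r` at `(x, w)` in the direction `(a, b)`. -/
def bellmanDeriv (α r x w a b : ℝ) : ℝ :=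
  2 * x * w ^ (r - 2 * α) * a +
    ((r - 2 * α) * x ^ 2 * w ^ (r - 2 * α - 1) + bellmanConst α r * r * w ^ (r - 1)) * b

/-- The second derivative of `bellman α r` at `(x, w)` in the direction `(a, b)`. -/
def bellmanHess (α r x w a b : ℝ) : ℝ :=
  2 * w ^ (r - 2 * α) * a ^ 2 + 4 * (r - 2 * α) * x * w ^ (r - 2 * α - 1) * a * b +
    ((r - 2 * α) * (r - 2 * α - 1) * x ^ 2 * w ^ (r - 2 * α - 2) +
      bellmanConst α r * r * (r - 1) * w ^ (r - 2)) * b ^ 2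

lemma bellmanConst_nonneg (hr : 1 < r) : 0 ≤ bellmanConst α r :=
  div_nonneg (by positivity) (mul_nonneg (by linarith) (by linarith))

lemma bellman_nonneg (hr : 1 < r) (hw : 0 ≤ w) : 0 ≤ bellman α r x w := by
  have := bellmanConst_nonneg (α := α) hr
  unfold bellman
  positivity

lemma sq_mul_rpow_le (hw : 0 < w) (hx : |x| ≤ w ^ α) : x ^ 2 * w ^ (r - 2 * α) ≤ w ^ r :=
  calc x ^ 2 * w ^ (r - 2 * α) ≤ (w ^ α) ^ 2 * w ^ (r - 2 * α) := by
        rw [← sq_abs]; gcongr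
    _ = w ^ r := by
        rw [← Real.rpow_mul_natCast hw.le, ← Real.rpow_add hw]
        congr 1; push_cast; ring

lemma bellman_le (hw : 0 < w) (hx : |x| ≤ w ^ α) :
    bellman α r x w ≤ (1 + bellmanConst α r) * w ^ r := by
  unfold bellman
  linarith [sq_mul_rpow_le (r := r) hw hx]

lemma rpow_mul_sq_le_bellmanHess (hr : 1 < r) (hw : 0 < w) (hx : |x| ≤ w ^ α) (a b : ℝ) :
    w ^ (r - 2 * α) * a ^ 2 ≤ bellmanHess α r x w a b := by
  have hK : bellmanConst α r * r * (r - 1) =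
      4 * (r - 2 * α) ^ 2 + |(r - 2 * α) * (r - 2 * α - 1)| := by
    have : r - 1 ≠ 0 := by linarith
    unfold bellmanConst
    field_simp
  have hdom := sq_mul_rpow_le (r := r) hw hx
  unfold bellmanHess
  rw [hK, Real.rpow_sub_one hw.ne', Real.rpow_sub hw _ 2, Real.rpow_sub hw _ 2, Real.rpow_two]
  generalize r - 2 * α = k at *
  generalize hp : w ^ k = p at *
  have hp0 : 0 ≤ p := hp ▸ Real.rpow_nonneg hw.le k
  have hsquare : 0 ≤ p * (a + 2 * k * x * (b / w)) ^ 2 := by positivity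
  have hconst : 0 ≤ (4 * k ^ 2 + |k * (k - 1)|) * (w ^ r - x ^ 2 * p) * (b / w) ^ 2 :=
    mul_nonneg (mul_nonneg (by positivity) (sub_nonneg.2 hdom)) (sq_nonneg _)
  have habs : 0 ≤ (k * (k - 1) + |k * (k - 1)|) * (x ^ 2 * p) * (b / w) ^ 2 :=
    mul_nonneg (mul_nonneg (by linarith [neg_abs_le (k * (k - 1))]) (by positivity)) (sq_nonneg _)
  linear_combination hsquare + hconst + habs

lemma hasDerivAt_bellman_line {a b θ : ℝ} (hw : 0 < w + θ * b) :
    HasDerivAt (fun θ ↦ bellman α r (x + θ * a) (w + θ * b))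
      (bellmanDeriv α r (x + θ * a) (w + θ * b) a b) θ := by
  have hx : HasDerivAt (fun θ ↦ x + θ * a) a θ := (hasDerivAt_mul_const a).const_add x
  have hpow (s : ℝ) := ((hasDerivAt_mul_const b).const_add w).rpow_const (p := s) (Or.inl hw.ne')
  refine (((hx.fun_pow 2).mul (hpow _)).add ((hpow r).const_mul _)).congr_deriv ?_
  unfold bellmanDeriv
  norm_num
  ring

lemma hasDerivAt_bellmanDeriv_line {a b θ : ℝ} (hw : 0 < w + θ * b) :
    HasDerivAt (fun θ ↦ bellmanDeriv α r (x + θ * a) (w + θ * b) a b)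
      (bellmanHess α r (x + θ * a) (w + θ * b) a b) θ := by
  have hx : HasDerivAt (fun θ ↦ x + θ * a) a θ := (hasDerivAt_mul_const a).const_add x
  have hpow (s : ℝ) := ((hasDerivAt_mul_const b).const_add w).rpow_const (p := s) (Or.inl hw.ne')
  refine ((((hx.const_mul 2).mul (hpow _)).mul_const a).add
    (((((hx.fun_pow 2).const_mul (r - 2 * α)).mul (hpow _)).add
      ((hpow (r - 1)).const_mul _)).mul_const b)).congr_deriv ?_
  unfold bellmanHess
  rw [show r - 2 * α - 2 = r - 2 * α - 1 - 1 by ring, show r - 2 = r - 1 - 1 by ring]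
  norm_num
  ring

lemma abs_add_mul_sub_le_rpow {X H θ : ℝ} (hα₀ : 0 ≤ α) (hα₁ : α ≤ 1) (hw : 0 ≤ w) (hH : 0 ≤ H)
    (hx : |x| ≤ w ^ α) (hX : |X| ≤ H ^ α) (hθ : θ ∈ Icc 0 1) :
    |x + θ * (X - x)| ≤ (w + θ * (H - w)) ^ α := by
  have hθ' : 0 ≤ 1 - θ := sub_nonneg.2 hθ.2
  calc |x + θ * (X - x)| = |(1 - θ) * x + θ * X| := by ring_nf
    _ ≤ (1 - θ) * |x| + θ * |X| := by
        refine (abs_add_le _ _).trans_eq ?_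
        rw [abs_mul, abs_mul, abs_of_nonneg hθ', abs_of_nonneg hθ.1]
    _ ≤ (1 - θ) * w ^ α + θ * H ^ α := by
        have := hθ.1
        gcongr
    _ ≤ ((1 - θ) * w + θ * H) ^ α :=
        (Real.concaveOn_rpow hα₀ hα₁).2 hw hH hθ' hθ.1 (by ring)
    _ = (w + θ * (H - w)) ^ α := by ring_nf

lemma bellman_add_bellmanDeriv_add_le {X H : ℝ} (hα₀ : 0 ≤ α) (hα₁ : α ≤ 1) (hr : 1 < r)
    (hw : 0 < w) (hH : 0 < H) (hx : |x| ≤ w ^ α) (hX : |X| ≤ H ^ α) :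
    bellman α r x w + bellmanDeriv α r x w (X - x) (H - w) +
      min (w ^ (r - 2 * α)) (H ^ (r - 2 * α)) * (X - x) ^ 2 / 2 ≤ bellman α r X H := by
  have hmem (θ : ℝ) (hθ : θ ∈ Icc (0 : ℝ) 1) : w + θ * (H - w) ∈ uIcc w H := by
    rw [← segment_eq_uIcc, segment_eq_image']
    exact ⟨θ, hθ, rfl⟩
  have hpos (θ : ℝ) (hθ : θ ∈ Icc (0 : ℝ) 1) : 0 < w + θ * (H - w) :=
    (lt_min hw hH).trans_le (hmem θ hθ).1
  have hmin (θ : ℝ) (hθ : θ ∈ Icc (0 : ℝ) 1) : min (w ^ (r - 2 * α)) (H ^ (r - 2 * α)) ≤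
      (w + θ * (H - w)) ^ (r - 2 * α) := by
    obtain ⟨hl, hu⟩ | ⟨hl, hu⟩ := mem_uIcc.1 (hmem θ hθ)
    · exact min_rpow_le_rpow _ hw hl hu
    · exact min_comm (w ^ (r - 2 * α)) _ ▸ min_rpow_le_rpow _ hH hl hu
  have htaylor := add_half_le_of_le_deriv_deriv
    (c := min (w ^ (r - 2 * α)) (H ^ (r - 2 * α)) * (X - x) ^ 2)
    (fun θ hθ ↦ hasDerivAt_bellman_line (α := α) (r := r) (x := x) (a := X - x) (hpos θ hθ))
    (fun θ hθ ↦ hasDerivAt_bellmanDeriv_line (hpos θ hθ))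
    (fun θ hθ ↦ (mul_le_mul_of_nonneg_right (hmin θ hθ) (sq_nonneg _)).trans
      (rpow_mul_sq_le_bellmanHess hr (hpos θ hθ)
        (abs_add_mul_sub_le_rpow hα₀ hα₁ hw.le hH.le hx hX hθ) _ _))
  simpa only [zero_mul, add_zero, one_mul, add_sub_cancel] using htaylor

end Bellman

lemma heat_pos {h : E →ᵇ ℝ} (hh : ∀ x, 0 < h x) (t : ℝ) (x : E) : 0 < heat t h x := by
  have hsupp : Function.support (fun z ↦ h (x + √t • z)) = univ :=
    eq_univ_of_forall fun z ↦ (hh _).ne'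
  rw [heat_apply, integral_pos_iff_support_of_nonneg (fun z ↦ (hh _).le)
    (integrable_comp_add_smul h _ _), hsupp]
  simp

lemma lintegral_le_of_tendsto {X ι : Type*} [MeasurableSpace X] {μ : Measure X} {l : Filter ι}
    [l.IsCountablyGenerated] [l.NeBot] {F : ι → X → ℝ≥0∞} {G : X → ℝ≥0∞} {C : ℝ≥0∞}
    (hF : ∀ i, Measurable (F i)) (hlim : ∀ᵐ x ∂μ, Tendsto (F · x) l (𝓝 (G x)))
    (hC : ∀ᶠ i in l, ∫⁻ x, F i x ∂μ ≤ C) : ∫⁻ x, G x ∂μ ≤ C :=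
  calc ∫⁻ x, G x ∂μ = ∫⁻ x, liminf (F · x) l ∂μ :=
        lintegral_congr_ae (hlim.mono fun _ hx ↦ hx.liminf_eq.symm)
    _ ≤ liminf (fun i ↦ ∫⁻ x, F i x ∂μ) l := lintegral_liminf_le hF
    _ ≤ C := liminf_le_of_frequently_le' hC.frequently

lemma setLIntegral_le_of_add_le {φ D : ℝ → ℝ≥0∞} {C : ℝ≥0∞} {s T : ℝ} (hφ : Measurable φ)
    (hs : 0 < s) (hC : ∀ t, 0 ≤ t → φ t ≤ C) (hD : ∀ t, 0 ≤ t → φ (t + s) + D t ≤ φ t) :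
    ∫⁻ t in Ioc 0 T, D t ≤ ENNReal.ofReal s * C := by
  obtain rfl | hC_top := eq_or_ne C ⊤
  · simp [ENNReal.mul_top, hs]
  have hbound (a b : ℝ) (ha : 0 ≤ a) : ∫⁻ t in Ioc a b, φ t ≤ ENNReal.ofReal (b - a) * C := by
    simpa [mul_comm] using setLIntegral_mono (μ := volume) (measurable_const (a := C))
      fun t (ht : t ∈ Ioc a b) ↦ hC t (ha.trans ht.1.le)
  have hshift : ∫⁻ t in Ioc 0 T, φ (t + s) = ∫⁻ t in Ioc s (T + s), φ t := by
    rw [← (measurePreserving_add_right (volume : Measure ℝ) s).setLIntegral_comp_preimage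
      measurableSet_Ioc hφ, preimage_add_const_Ioc, sub_self, add_sub_cancel_right]
  have hfin : ∫⁻ t in Ioc s (T + s), φ t ≠ ⊤ :=
    ((hbound s _ hs.le).trans_lt (ENNReal.mul_lt_top ENNReal.ofReal_lt_top hC_top.lt_top)).ne
  refine (ENNReal.le_of_add_le_add_left hfin ?_).trans ((hbound 0 s le_rfl).trans_eq (by simp))
  calc (∫⁻ t in Ioc s (T + s), φ t) + ∫⁻ t in Ioc 0 T, D t
      = ∫⁻ t in Ioc 0 T, φ (t + s) + D t := by
        rw [← hshift, lintegral_add_left (by fun_prop)]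
    _ ≤ ∫⁻ t in Ioc 0 T, φ t := setLIntegral_mono hφ fun t ht ↦ hD t ht.1.le
    _ ≤ ∫⁻ t in Ioc 0 s ∪ Ioc s (T + s), φ t := lintegral_mono_set <|
        (Ioc_subset_Ioc_right (by linarith)).trans Ioc_subset_Ioc_union_Ioc
    _ ≤ (∫⁻ t in Ioc s (T + s), φ t) + ∫⁻ t in Ioc 0 s, φ t :=
        (lintegral_union_le _ _ _).trans_eq (add_comm _ _)

lemma lintegral_ofReal_sq_stdGaussian (L : StrongDual ℝ E) :
    ∫⁻ z, ENNReal.ofReal (L z ^ 2) ∂stdGaussian E = ENNReal.ofReal (‖L‖ ^ 2) := by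
  have hint : Integrable (fun z ↦ L z ^ 2) (stdGaussian E) :=
    (IsGaussian.memLp_dual (stdGaussian E) L 2 (by norm_num)).integrable_sq
  rw [← ofReal_integral_eq_lintegral_ofReal hint (.of_forall fun z ↦ sq_nonneg _),
    ← variance_dual_stdGaussian L, variance_eq_integral (by fun_prop),
    integral_strongDual_stdGaussian]
  simp

/-- The function `f` is dominated by the power `h ^ α` of a positive function, with an exponent
`0 ≤ α ≤ 1`; by Jensen's inequality the heat semigroup preserves this relation. -/
structure IsPowerMajorant (f h : E → ℝ) (α : ℝ) : Prop where
  nonneg : 0 ≤ α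
  le_one : α ≤ 1
  pos : ∀ x, 0 < h x
  abs_le : ∀ x, |f x| ≤ h x ^ α

section Energy

variable {F : Type*} [FunLike F E ℝ] [BoundedContinuousMapClass F E ℝ]
  {f : F} {h : E →ᵇ ℝ} {α r s t : ℝ}

/-- The Bellman function along the heat flow of the pair `(f, h)`. -/
def heatBellman (α r : ℝ) (f : F) (h : E →ᵇ ℝ) (t : ℝ) (x : E) : ℝ :=
  bellman α r (heat t f x) (heat t h x)

/-- The part of the Jensen gap of `heatBellman` over a time step of length `s` which is guaranteed
by the uniform convexity of `bellman` in its first variable. -/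
def heatGap (α r : ℝ) (f : F) (h : E →ᵇ ℝ) (s t : ℝ) (x z : E) : ℝ :=
  min (heat (t + s) h x ^ (r - 2 * α)) (heat t h (x + √s • z) ^ (r - 2 * α)) *
    (heat t f (x + √s • z) - heat (t + s) f x) ^ 2 / 2

lemma IsPowerMajorant.abs_heat_le (H : IsPowerMajorant f h α) (t : ℝ) (x : E) :
    |heat t f x| ≤ heat t h x ^ α := by
  have hint : Integrable (fun z ↦ h (x + √t • z) ^ α) (stdGaussian E) := by
    refine .of_bound (Continuous.aestronglyMeasurable ?_) (‖h‖ ^ α) (.of_forall fun z ↦ ?_)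
    · exact Continuous.rpow_const (by fun_prop) fun _ ↦ .inr H.nonneg
    · rw [Real.norm_of_nonneg (Real.rpow_nonneg (H.pos _).le _)]
      exact Real.rpow_le_rpow (H.pos _).le ((le_abs_self _).trans (h.norm_coe_le_norm _)) H.nonneg
  calc |heat t f x| ≤ ∫ z, |f (x + √t • z)| ∂stdGaussian E := abs_integral_le_integral_abs
    _ ≤ ∫ z, h (x + √t • z) ^ α ∂stdGaussian E :=
        integral_mono (integrable_comp_add_smul f _ _).abs hint fun z ↦ H.abs_le _
    _ ≤ heat t h x ^ α :=
        (Real.concaveOn_rpow H.nonneg H.le_one).le_map_integral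
          (Real.continuous_rpow_const H.nonneg).continuousOn isClosed_Ici
          (.of_forall fun z ↦ (H.pos _).le) (integrable_comp_add_smul h _ _) hint

lemma continuous_heat_rpow_comp {X : Type*} [TopologicalSpace X] (hh : ∀ x, 0 < h x) (k : ℝ)
    {τ : X → ℝ} {ξ : X → E} (hτ : Continuous τ) (hξ : Continuous ξ) :
    Continuous fun p ↦ heat (τ p) h (ξ p) ^ k :=
  Continuous.rpow_const (by fun_prop) fun _ ↦ .inl (heat_pos hh _ _).ne'

lemma continuous_heatBellman_comp {X : Type*} [TopologicalSpace X] (hh : ∀ x, 0 < h x)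
    {τ : X → ℝ} {ξ : X → E} (hτ : Continuous τ) (hξ : Continuous ξ) :
    Continuous fun p ↦ heatBellman α r f h (τ p) (ξ p) :=
  (((continuous_heat_comp f hτ hξ).pow 2).mul (continuous_heat_rpow_comp hh _ hτ hξ)).add
    ((continuous_heat_rpow_comp hh _ hτ hξ).const_mul _)

lemma continuous_heatGap (hh : ∀ x, 0 < h x) (s : ℝ) :
    Continuous fun p : ℝ × E × E ↦ heatGap α r f h s p.1 p.2.1 p.2.2 := by
  unfold heatGap
  refine Continuous.div_const (.mul (.min ?_ ?_) (by fun_prop)) 2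
  · exact continuous_heat_rpow_comp hh _ (by fun_prop) (by fun_prop)
  · exact continuous_heat_rpow_comp hh _ (by fun_prop) (by fun_prop)

lemma heatGap_nonneg (hh : ∀ x, 0 < h x) (s t : ℝ) (x z : E) : 0 ≤ heatGap α r f h s t x z := by
  have (t : ℝ) (x : E) : 0 ≤ heat t h x ^ (r - 2 * α) := Real.rpow_nonneg (heat_pos hh t x).le _
  have := le_min (this (t + s) x) (this t (x + √s • z))
  unfold heatGap
  positivity

lemma heatBellman_nonneg (hh : ∀ x, 0 < h x) (hr : 1 < r) (t : ℝ) (x : E) :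
    0 ≤ heatBellman α r f h t x :=
  bellman_nonneg hr (heat_pos hh t x).le

lemma IsPowerMajorant.heatBellman_le (H : IsPowerMajorant f h α) (r t : ℝ) (x : E) :
    heatBellman α r f h t x ≤ (1 + bellmanConst α r) * heat t h x ^ r :=
  bellman_le (heat_pos H.pos t x) (H.abs_heat_le t x)

lemma IsPowerMajorant.integrable_heatBellman_comp_add_smul (H : IsPowerMajorant f h α)
    (hr : 1 < r) (s t : ℝ) (x : E) :
    Integrable (fun z ↦ heatBellman α r f h t (x + s • z)) (stdGaussian E) := by
  have hK := bellmanConst_nonneg (α := α) hr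
  refine .of_bound (Continuous.aestronglyMeasurable ?_) ((1 + bellmanConst α r) * ‖h‖ ^ r)
    (.of_forall fun z ↦ ?_)
  · exact continuous_heatBellman_comp H.pos (by fun_prop) (by fun_prop)
  · rw [Real.norm_of_nonneg (heatBellman_nonneg H.pos hr _ _)]
    refine (H.heatBellman_le r _ _).trans ?_
    gcongr
    · exact (heat_pos H.pos _ _).le
    · exact (le_abs_self _).trans (HeatFlow.abs_heat_le t h _)

lemma integrable_heat_comp_add_smul_sub (f : F) (s t c : ℝ) (x : E) :
    Integrable (fun z ↦ heat t f (x + s • z) - c) (stdGaussian E) :=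
  (integrable_comp_add_smul _ _ _).sub (integrable_const _)

lemma integral_heat_comp_add_smul_sub (f : F) (hs : 0 ≤ s) (ht : 0 ≤ t) (x : E) :
    ∫ z, (heat t f (x + √s • z) - heat (t + s) f x) ∂stdGaussian E = 0 := by
  rw [integral_sub (integrable_comp_add_smul _ _ _) (integrable_const _), add_comm t,
    ← heat_heat hs ht, heat_apply s]
  simp

lemma integrable_bellmanDeriv_heat (f : F) (h : E →ᵇ ℝ) (α r s t x₀ w₀ : ℝ) (x : E) :
    Integrable (fun z ↦ bellmanDeriv α r x₀ w₀ (heat t f (x + s • z) - x₀)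
      (heat t h (x + s • z) - w₀)) (stdGaussian E) :=
  ((integrable_heat_comp_add_smul_sub f s t x₀ x).const_mul _).add
    ((integrable_heat_comp_add_smul_sub h s t w₀ x).const_mul _)

lemma integral_bellmanDeriv_heat (f : F) (h : E →ᵇ ℝ) (α r : ℝ) (hs : 0 ≤ s) (ht : 0 ≤ t) (x : E) :
    ∫ z, bellmanDeriv α r (heat (t + s) f x) (heat (t + s) h x)
      (heat t f (x + √s • z) - heat (t + s) f x)
      (heat t h (x + √s • z) - heat (t + s) h x) ∂stdGaussian E = 0 := by
  unfold bellmanDeriv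
  rw [integral_add ((integrable_heat_comp_add_smul_sub f _ _ _ _).const_mul _)
    ((integrable_heat_comp_add_smul_sub h _ _ _ _).const_mul _), integral_const_mul,
    integral_const_mul, integral_heat_comp_add_smul_sub f hs ht,
    integral_heat_comp_add_smul_sub h hs ht, mul_zero, mul_zero, add_zero]

lemma IsPowerMajorant.heatBellman_add_lintegral_heatGap_le (H : IsPowerMajorant f h α)
    (hr : 1 < r) (hs : 0 ≤ s) (ht : 0 ≤ t) (x : E) :
    ENNReal.ofReal (heatBellman α r f h (t + s) x) +
        ∫⁻ z, ENNReal.ofReal (heatGap α r f h s t x z) ∂stdGaussian E ≤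
      ∫⁻ z, ENNReal.ofReal (heatBellman α r f h t (x + √s • z)) ∂stdGaussian E := by
  set B₀ := heatBellman α r f h (t + s) x with hB₀
  set B := fun z ↦ heatBellman α r f h t (x + √s • z)
  set D := fun z ↦ bellmanDeriv α r (heat (t + s) f x) (heat (t + s) h x)
    (heat t f (x + √s • z) - heat (t + s) f x) (heat t h (x + √s • z) - heat (t + s) h x)
  have hB : Integrable B (stdGaussian E) := H.integrable_heatBellman_comp_add_smul hr _ _ _
  have hD : Integrable D (stdGaussian E) := integrable_bellmanDeriv_heat _ _ _ _ _ _ _ _ _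
  have hD_zero : ∫ z, D z ∂stdGaussian E = 0 := integral_bellmanDeriv_heat f h α r hs ht x
  have hgap (z : E) : heatGap α r f h s t x z ≤ B z - D z - B₀ := by
    have := bellman_add_bellmanDeriv_add_le H.nonneg H.le_one hr (heat_pos H.pos (t + s) x)
      (heat_pos H.pos t (x + √s • z)) (H.abs_heat_le _ _) (H.abs_heat_le _ _)
    simp only [B, D, hB₀, heatBellman, heatGap]
    linarith
  have hgap_nonneg (z : E) : 0 ≤ B z - D z - B₀ := (heatGap_nonneg H.pos _ _ _ _).trans (hgap z)
  have hB₀_nonneg : 0 ≤ B₀ := heatBellman_nonneg H.pos hr _ _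
  have hint : Integrable (fun z ↦ B z - D z - B₀) (stdGaussian E) :=
    (hB.sub hD).sub (integrable_const _)
  calc ENNReal.ofReal B₀ + ∫⁻ z, ENNReal.ofReal (heatGap α r f h s t x z) ∂stdGaussian E
      ≤ ENNReal.ofReal B₀ + ∫⁻ z, ENNReal.ofReal (B z - D z - B₀) ∂stdGaussian E := by
        gcongr with z; exact hgap z
    _ = ENNReal.ofReal (B₀ + ∫ z, (B z - D z - B₀) ∂stdGaussian E) := by
        rw [← ofReal_integral_eq_lintegral_ofReal hint (.of_forall hgap_nonneg),
          ENNReal.ofReal_add hB₀_nonneg (integral_nonneg hgap_nonneg)]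
    _ = ENNReal.ofReal (∫ z, B z ∂stdGaussian E) := by
        rw [integral_sub (by exact hB.sub hD) (integrable_const _), integral_sub hB hD, hD_zero]
        simp
    _ = ∫⁻ z, ENNReal.ofReal (B z) ∂stdGaussian E :=
        ofReal_integral_eq_lintegral_ofReal hB (.of_forall fun _ ↦ heatBellman_nonneg H.pos hr _ _)

/-- The Bellman energy of the pair `(f, h)` at time `t`. -/
def heatEnergy (α r : ℝ) (f : F) (h : E →ᵇ ℝ) (t : ℝ) : ℝ≥0∞ :=
  ∫⁻ x, ENNReal.ofReal (heatBellman α r f h t x)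

lemma measurable_heatEnergy (hh : ∀ x, 0 < h x) : Measurable (heatEnergy α r f h) :=
  (continuous_heatBellman_comp hh continuous_fst
    continuous_snd).measurable.ennreal_ofReal.lintegral_prod_right'

lemma IsPowerMajorant.heatEnergy_zero_le (H : IsPowerMajorant f h α) (hr : 1 < r) :
    heatEnergy α r f h 0 ≤
      ENNReal.ofReal (1 + bellmanConst α r) * ∫⁻ x, ENNReal.ofReal (h x ^ r) := by
  have hK := bellmanConst_nonneg (α := α) hr
  rw [← lintegral_const_mul' _ _ ENNReal.ofReal_ne_top]
  refine lintegral_mono fun x ↦ ?_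
  rw [← ENNReal.ofReal_mul (by positivity)]
  refine ENNReal.ofReal_le_ofReal ((H.heatBellman_le r 0 x).trans_eq ?_)
  rw [heat_zero]
  rfl

lemma IsPowerMajorant.heatEnergy_add_lintegral_heatGap_le (H : IsPowerMajorant f h α)
    (hr : 1 < r) (hs : 0 ≤ s) (ht : 0 ≤ t) :
    heatEnergy α r f h (t + s) +
        ∫⁻ p, ENNReal.ofReal (heatGap α r f h s t p.1 p.2) ∂volume.prod (stdGaussian E) ≤
      heatEnergy α r f h t := by
  have hgap : Measurable fun p : E × E ↦ ENNReal.ofReal (heatGap α r f h s t p.1 p.2) :=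
    ((continuous_heatGap H.pos s).comp (.prodMk_right t)).measurable.ennreal_ofReal
  have hB : Measurable fun x ↦ ENNReal.ofReal (heatBellman α r f h (t + s) x) :=
    (continuous_heatBellman_comp H.pos continuous_const continuous_id).measurable.ennreal_ofReal
  have hB' : Measurable fun p : E × E ↦ ENNReal.ofReal (heatBellman α r f h t (p.1 + √s • p.2)) :=
    (continuous_heatBellman_comp H.pos (by fun_prop) (by fun_prop)).measurable.ennreal_ofReal
  calc _ = ∫⁻ x, (ENNReal.ofReal (heatBellman α r f h (t + s) x) +
        ∫⁻ z, ENNReal.ofReal (heatGap α r f h s t x z) ∂stdGaussian E) := by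
        rw [lintegral_prod _ hgap.aemeasurable, lintegral_add_left hB, heatEnergy]
    _ ≤ ∫⁻ x, ∫⁻ z, ENNReal.ofReal (heatBellman α r f h t (x + √s • z)) ∂stdGaussian E :=
        lintegral_mono fun x ↦ H.heatBellman_add_lintegral_heatGap_le hr hs ht x
    _ = ∫⁻ _, heatEnergy α r f h t ∂stdGaussian E := by
        rw [lintegral_lintegral_swap hB'.aemeasurable]
        exact lintegral_congr fun _ ↦ lintegral_add_right_eq_self
          (fun x ↦ ENNReal.ofReal (heatBellman α r f h t x)) _
    _ = heatEnergy α r f h t := by simp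

lemma IsPowerMajorant.heatEnergy_le_zero (H : IsPowerMajorant f h α) (hr : 1 < r) (ht : 0 ≤ t) :
    heatEnergy α r f h t ≤ heatEnergy α r f h 0 := by
  simpa using le_self_add.trans (H.heatEnergy_add_lintegral_heatGap_le hr ht le_rfl)

lemma IsPowerMajorant.lintegral_heatGap_le (H : IsPowerMajorant f h α) (hr : 1 < r) (hs : 0 < s)
    (T : ℝ) :
    ∫⁻ p, ENNReal.ofReal (heatGap α r f h s p.1 p.2.1 p.2.2)
        ∂(volume.restrict (Ioc 0 T)).prod (volume.prod (stdGaussian E)) ≤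
      ENNReal.ofReal s * heatEnergy α r f h 0 := by
  rw [lintegral_prod _ (continuous_heatGap H.pos s).measurable.ennreal_ofReal.aemeasurable]
  exact setLIntegral_le_of_add_le (measurable_heatEnergy H.pos) hs
    (fun t ht ↦ H.heatEnergy_le_zero hr ht)
    (fun t ht ↦ H.heatEnergy_add_lintegral_heatGap_le hr hs.le ht)

end Energy

section SquareFunction

variable {f : 𝓢(E, ℝ)} {h : E →ᵇ ℝ} {α r t : ℝ}

lemma tendsto_heat_increment_div_sqrt (f : 𝓢(E, ℝ)) (ht : 0 < t) (x z : E) :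
    Tendsto (fun s ↦ (√s)⁻¹ * (heat t f (x + √s • z) - heat (t + s) f x)) (𝓝[>] 0)
      (𝓝 (fderiv ℝ (heat t f) x z)) := by
  have hsqrt : Tendsto Real.sqrt (𝓝[>] 0) (𝓝[≠] 0) :=
    tendsto_nhdsWithin_iff.2 ⟨(Real.continuous_sqrt.tendsto' 0 0 Real.sqrt_zero).mono_left
      nhdsWithin_le_nhds, eventually_mem_nhdsWithin.mono fun _ hs ↦ (Real.sqrt_pos.2 hs).ne'⟩
  have hspace := ((differentiable_heat f t x).hasFDerivAt.hasLineDerivAt z).tendsto_slope_zero.comp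
    hsqrt
  have htime := (hsqrt.mono_right nhdsWithin_le_nhds).mul
    ((hasDerivAt_heat f ht x).tendsto_slope_zero.mono_left (nhdsGT_le_nhdsNE 0))
  have hdiff := hspace.sub htime
  rw [zero_mul, sub_zero] at hdiff
  refine hdiff.congr fun s ↦ ?_
  have hinv : √s * s⁻¹ = (√s)⁻¹ := by
    rw [← div_eq_mul_inv, Real.sqrt_div_self]
  simp only [Function.comp_apply, smul_eq_mul]
  rw [← mul_assoc, hinv]
  ring

lemma tendsto_heatGap_div (hh : ∀ x, 0 < h x) (f : 𝓢(E, ℝ)) (α r : ℝ) (ht : 0 < t) (x z : E) :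
    Tendsto (fun s ↦ heatGap α r f h s t x z / s) (𝓝[>] 0)
      (𝓝 (heat t h x ^ (r - 2 * α) * fderiv ℝ (heat t f) x z ^ 2 / 2)) := by
  have hweight : Tendsto (fun s ↦ min (heat (t + s) h x ^ (r - 2 * α))
      (heat t h (x + √s • z) ^ (r - 2 * α))) (𝓝[>] 0) (𝓝 (heat t h x ^ (r - 2 * α))) := by
    refine (Continuous.tendsto' (.min ?_ ?_) _ _ (by simp)).mono_left nhdsWithin_le_nhds
    · exact continuous_heat_rpow_comp hh _ (by fun_prop) (by fun_prop)
    · exact continuous_heat_rpow_comp hh _ (by fun_prop) (by fun_prop)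
  refine ((hweight.mul ((tendsto_heat_increment_div_sqrt f ht x z).pow 2)).div_const 2).congr' ?_
  filter_upwards [self_mem_nhdsWithin] with s hs
  rw [heatGap, mul_pow, inv_pow, Real.sq_sqrt (le_of_lt hs)]
  ring

@[fun_prop]
lemma continuous_fderiv_heat_comp {X : Type*} [TopologicalSpace X] (f : 𝓢(E, ℝ)) {τ : X → ℝ}
    {ξ : X → E} (hτ : Continuous τ) (hξ : Continuous ξ) :
    Continuous fun p ↦ fderiv ℝ (heat (τ p) f) (ξ p) :=
  continuous_clm_apply.2 fun v ↦ by simp_rw [fderiv_heat_apply]; fun_prop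

lemma lintegral_ofReal_mul_sq_div_two (L : StrongDual ℝ E) {c : ℝ} (hc : 0 ≤ c) :
    ∫⁻ z, ENNReal.ofReal (c * L z ^ 2 / 2) ∂stdGaussian E = ENNReal.ofReal (c / 2 * ‖L‖ ^ 2) := by
  simp_rw [mul_div_right_comm, ENNReal.ofReal_mul (by positivity : 0 ≤ c / 2)]
  rw [lintegral_const_mul' _ _ ENNReal.ofReal_ne_top, lintegral_ofReal_sq_stdGaussian]

lemma IsPowerMajorant.lintegral_heat_rpow_mul_fderiv_sq_le (H : IsPowerMajorant f h α)
    (hr : 1 < r) (T : ℝ) :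
    ∫⁻ p, ENNReal.ofReal
        (heat p.1 h p.2.1 ^ (r - 2 * α) * fderiv ℝ (heat p.1 f) p.2.1 p.2.2 ^ 2 / 2)
        ∂(volume.restrict (Ioc 0 T)).prod (volume.prod (stdGaussian E)) ≤
      heatEnergy α r f h 0 := by
  have hmeas (s : ℝ) : Measurable fun p : ℝ × E × E ↦
      ENNReal.ofReal (heatGap α r f h s p.1 p.2.1 p.2.2 / s) :=
    ((continuous_heatGap H.pos s).div_const s).measurable.ennreal_ofReal
  refine lintegral_le_of_tendsto (l := 𝓝[>] 0) hmeas ?_ ?_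
  · filter_upwards [Measure.quasiMeasurePreserving_fst.ae (ae_restrict_mem measurableSet_Ioc)]
      with p hp
    exact ENNReal.tendsto_ofReal (tendsto_heatGap_div H.pos f α r hp.1 p.2.1 p.2.2)
  · filter_upwards [self_mem_nhdsWithin] with s (hs : 0 < s)
    simp_rw [ENNReal.ofReal_div_of_pos hs, div_eq_mul_inv]
    rw [lintegral_mul_const' _ _ (by simpa), ← div_eq_mul_inv]
    exact ENNReal.div_le_of_le_mul' (H.lintegral_heatGap_le hr hs T)

theorem IsPowerMajorant.lintegral_heat_rpow_mul_norm_fderiv_sq_le (H : IsPowerMajorant f h α)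
    (hr : 1 < r) (T : ℝ) :
    ∫⁻ t in Ioc 0 T, ∫⁻ x, ENNReal.ofReal (heat t h x ^ (r - 2 * α) *
        ‖fderiv ℝ (heat t f) x‖ ^ 2) ≤
      ENNReal.ofReal (2 * (1 + bellmanConst α r)) * ∫⁻ x, ENNReal.ofReal (h x ^ r) := by
  have hmeas : Measurable fun p : ℝ × E × E ↦ ENNReal.ofReal (heat p.1 h p.2.1 ^ (r - 2 * α) *
      fderiv ℝ (heat p.1 f) p.2.1 p.2.2 ^ 2 / 2) := by
    have := continuous_heat_rpow_comp H.pos (r - 2 * α) (X := ℝ × E × E) continuous_fst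
      (continuous_fst.comp continuous_snd)
    exact Continuous.measurable (by fun_prop) |>.ennreal_ofReal
  calc _ = ∫⁻ t in Ioc 0 T, ∫⁻ x, ENNReal.ofReal 2 * ∫⁻ z, ENNReal.ofReal
          (heat t h x ^ (r - 2 * α) * fderiv ℝ (heat t f) x z ^ 2 / 2) ∂stdGaussian E := by
        refine lintegral_congr fun t ↦ lintegral_congr fun x ↦ ?_
        have hW : 0 ≤ heat t h x ^ (r - 2 * α) := Real.rpow_nonneg (heat_pos H.pos t x).le _
        rw [lintegral_ofReal_mul_sq_div_two _ hW, ← ENNReal.ofReal_mul zero_le_two]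
        congr 1
        ring
    _ = ENNReal.ofReal 2 * ∫⁻ p, ENNReal.ofReal (heat p.1 h p.2.1 ^ (r - 2 * α) *
          fderiv ℝ (heat p.1 f) p.2.1 p.2.2 ^ 2 / 2)
          ∂(volume.restrict (Ioc 0 T)).prod (volume.prod (stdGaussian E)) := by
        simp_rw [lintegral_const_mul' _ _ ENNReal.ofReal_ne_top]
        rw [lintegral_prod _ hmeas.aemeasurable]
        congr 2 with t
        exact (lintegral_prod (fun p : E × E ↦ ENNReal.ofReal (heat t h p.1 ^ (r - 2 * α) *
          fderiv ℝ (heat t f) p.1 p.2 ^ 2 / 2))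
          (hmeas.comp measurable_prodMk_left).aemeasurable).symm
    _ ≤ ENNReal.ofReal 2 * (ENNReal.ofReal (1 + bellmanConst α r) *
          ∫⁻ x, ENNReal.ofReal (h x ^ r)) := by
        gcongr
        exact (H.lintegral_heat_rpow_mul_fderiv_sq_le hr T).trans (H.heatEnergy_zero_le hr)
    _ = _ := by rw [← mul_assoc, ← ENNReal.ofReal_mul zero_le_two]

end SquareFunction

section AbsRpow

variable {X F : Type*} [TopologicalSpace X] [FunLike F X ℝ] [BoundedContinuousMapClass F X ℝ]
  {p r s : ℝ}

/-- The power `|f| ^ s` of a bounded continuous function, as a bounded continuous function. -/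
def absRpow (f : F) (hs : 0 ≤ s) : X →ᵇ ℝ :=
  .ofNormedAddCommGroup (fun x ↦ |f x| ^ s) ((map_continuous f).abs.rpow_const fun _ ↦ .inr hs)
    (‖(f : X →ᵇ ℝ)‖ ^ s) fun x ↦ by
      rw [Real.norm_of_nonneg (by positivity)]
      exact Real.rpow_le_rpow (abs_nonneg _) ((f : X →ᵇ ℝ).norm_coe_le_norm x) hs

lemma absRpow_apply (f : F) (hs : 0 ≤ s) (x : X) : absRpow f hs x = |f x| ^ s := rfl

lemma ofReal_absRpow_apply (f : F) (hs : 0 ≤ s) (x : X) :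
    ENNReal.ofReal (absRpow f hs x) = ‖f x‖ₑ ^ s := by
  rw [absRpow_apply, ← ENNReal.ofReal_rpow_of_nonneg (abs_nonneg _) hs, Real.enorm_eq_ofReal_abs]

lemma absRpow_inv_rpow {f : F} (hf : ∀ x, 0 < f x) (hr : 0 < r) (x : X) :
    absRpow f (inv_nonneg.2 hr.le) x ^ r = f x := by
  rw [absRpow_apply, abs_of_pos (hf x), Real.rpow_inv_rpow (hf x).le hr.ne']

lemma isPowerMajorant_absRpow_inv {f : X → ℝ} {g : F} (hg : ∀ x, 0 < g x) (hr : 0 < r)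
    (hrp : r ≤ p) (hf : ∀ x, |f x| ^ p ≤ g x) :
    IsPowerMajorant f (absRpow g (inv_nonneg.2 hr.le)) (r / p) where
  nonneg := div_nonneg hr.le (hr.le.trans hrp)
  le_one := div_le_one_of_le₀ hrp (hr.le.trans hrp)
  pos x := Real.rpow_pos_of_pos (abs_pos.2 (hg x).ne') _
  abs_le x := by
    rw [absRpow_apply, abs_of_pos (hg x), ← Real.rpow_mul (hg x).le, inv_mul_eq_div,
      div_div_cancel_left' hr.ne']
    exact (Real.le_rpow_inv_iff_of_pos (abs_nonneg _) (hg x).le (hr.trans_le hrp)).2 (hf x)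

end AbsRpow

section BilinearEmbedding

variable {f g : 𝓢(E, ℝ)} {h : E →ᵇ ℝ} {α β p q r : ℝ}

lemma mul_le_rpow_mul_sq_add {c : ℝ} (hc : 0 < c) (k a b : ℝ) :
    a * b ≤ c ^ k * a ^ 2 + c ^ (-k) * b ^ 2 := by
  have : 0 < c ^ k := Real.rpow_pos_of_pos hc k
  have hsq : c ^ k * a ^ 2 + (c ^ k)⁻¹ * b ^ 2 - 2 * (a * b) = (c ^ k)⁻¹ * (c ^ k * a - b) ^ 2 := by
    field
  rw [Real.rpow_neg hc.le]
  have : 0 ≤ (c ^ k)⁻¹ * (c ^ k * a - b) ^ 2 := by positivity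
  have : 0 ≤ c ^ k * a ^ 2 + (c ^ k)⁻¹ * b ^ 2 := by positivity
  linarith

lemma IsPowerMajorant.lintegral_enorm_fderiv_heat_mul_le (Hf : IsPowerMajorant f h α)
    (Hg : IsPowerMajorant g h β) (hr : 1 < r) (hαβ : α + β = r) (T : ℝ) :
    ∫⁻ t in Ioc 0 T, ∫⁻ x, ‖fderiv ℝ (heat t f) x‖ₑ * ‖fderiv ℝ (heat t g) x‖ₑ ≤
      ENNReal.ofReal (2 * (1 + bellmanConst α r) + 2 * (1 + bellmanConst β r)) *
        ∫⁻ x, ENNReal.ofReal (h x ^ r) := by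
  have hmeas : Measurable fun p : ℝ × E ↦ ENNReal.ofReal
      (heat p.1 h p.2 ^ (r - 2 * α) * ‖fderiv ℝ (heat p.1 f) p.2‖ ^ 2) := by
    have := continuous_heat_rpow_comp Hf.pos (r - 2 * α) (X := ℝ × E) continuous_fst continuous_snd
    exact Continuous.measurable (by fun_prop) |>.ennreal_ofReal
  have hα := bellmanConst_nonneg (α := α) hr
  have hβ := bellmanConst_nonneg (α := β) hr
  calc _ ≤ ∫⁻ t in Ioc 0 T, ∫⁻ x,
          (ENNReal.ofReal (heat t h x ^ (r - 2 * α) * ‖fderiv ℝ (heat t f) x‖ ^ 2) +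
            ENNReal.ofReal (heat t h x ^ (r - 2 * β) * ‖fderiv ℝ (heat t g) x‖ ^ 2)) := by
        refine lintegral_mono fun t ↦ lintegral_mono fun x ↦ ?_
        have hW := heat_pos Hf.pos t x
        rw [← ofReal_norm, ← ofReal_norm, ← ENNReal.ofReal_mul (norm_nonneg _),
          ← ENNReal.ofReal_add (by positivity) (by positivity),
          show r - 2 * β = -(r - 2 * α) by linarith]
        exact ENNReal.ofReal_le_ofReal (mul_le_rpow_mul_sq_add hW _ _ _)
    _ = (∫⁻ t in Ioc 0 T, ∫⁻ x,
          ENNReal.ofReal (heat t h x ^ (r - 2 * α) * ‖fderiv ℝ (heat t f) x‖ ^ 2)) +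
          ∫⁻ t in Ioc 0 T, ∫⁻ x,
            ENNReal.ofReal (heat t h x ^ (r - 2 * β) * ‖fderiv ℝ (heat t g) x‖ ^ 2) := by
        rw [← lintegral_add_left hmeas.lintegral_prod_right']
        exact lintegral_congr fun t ↦ lintegral_add_left (hmeas.comp measurable_prodMk_left) _
    _ ≤ _ := by
        rw [ENNReal.ofReal_add (by positivity) (by positivity), add_mul]
        exact add_le_add (Hf.lintegral_heat_rpow_mul_norm_fderiv_sq_le hr T)
          (Hg.lintegral_heat_rpow_mul_norm_fderiv_sq_le hr T)

lemma exists_isPowerMajorant (f g : 𝓢(E, ℝ)) (hr : 0 < r) (hrp : r ≤ p) (hrq : r ≤ q) :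
    ∃ h : E →ᵇ ℝ, IsPowerMajorant f h (r / p) ∧ IsPowerMajorant g h (r / q) ∧
      ∫⁻ x, ENNReal.ofReal (h x ^ r) = (∫⁻ x, ‖f x‖ₑ ^ p) + (∫⁻ x, ‖g x‖ₑ ^ q) + 1 := by
  have hp := hr.le.trans hrp
  have hq := hr.le.trans hrq
  -- the Gaussian term is there to make `G` positive everywhere
  let G : E →ᵇ ℝ := absRpow f hp + absRpow g hq +
    .ofNormedAddCommGroup gaussianDensity continuous_gaussianDensity _ norm_gaussianDensity_le
  have hG (x : E) : G x = |f x| ^ p + |g x| ^ q + gaussianDensity x := rfl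
  have hf_nonneg (x : E) : 0 ≤ |f x| ^ p := by positivity
  have hg_nonneg (x : E) : 0 ≤ |g x| ^ q := by positivity
  have hG_pos (x : E) : 0 < G x := by
    linarith [hG x, hf_nonneg x, hg_nonneg x, gaussianDensity_pos x]
  refine ⟨absRpow G (inv_nonneg.2 hr.le),
    isPowerMajorant_absRpow_inv hG_pos hr hrp fun x ↦ ?_,
    isPowerMajorant_absRpow_inv hG_pos hr hrq fun x ↦ ?_, ?_⟩
  · linarith [hG x, hg_nonneg x, gaussianDensity_pos x]
  · linarith [hG x, hf_nonneg x, gaussianDensity_pos x]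
  · simp_rw [absRpow_inv_rpow hG_pos hr, hG]
    simp_rw [fun x ↦ ENNReal.ofReal_add (add_nonneg (hf_nonneg x) (hg_nonneg x))
      (gaussianDensity_pos x).le, fun x ↦ ENNReal.ofReal_add (hf_nonneg x) (hg_nonneg x)]
    simp_rw [← absRpow_apply f hp, ← absRpow_apply g hq, ofReal_absRpow_apply]
    rw [lintegral_add_right _ continuous_gaussianDensity.measurable.ennreal_ofReal,
      lintegral_add_right _ (by fun_prop), lintegral_ofReal_gaussianDensity]

end BilinearEmbedding

lemma heat_smul (a t : ℝ) (f : 𝓢(E, ℝ)) : heat t (a • f) = a • heat t f := by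
  ext x
  simp [heat_apply, integral_const_mul]

lemma heat_sum_apply {ι : Type*} (s : Finset ι) (f : ι → 𝓢(E, ℝ)) (t : ℝ) (x : E) :
    heat t (∑ i ∈ s, f i) x = ∑ i ∈ s, heat t (f i) x := by
  simp only [heat_apply, _root_.sum_apply]
  exact integral_finsetSum _ fun i _ ↦ integrable_comp_add_smul (f i) _ _

lemma fderiv_heat_smul (a t : ℝ) (f : 𝓢(E, ℝ)) (x : E) :
    fderiv ℝ (heat t (a • f)) x = a • fderiv ℝ (heat t f) x := by
  rw [heat_smul]
  exact fderiv_const_smul (differentiable_heat f t x) a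

lemma eLpNorm_ofReal_rpow {X G : Type*} [MeasurableSpace X] [NormedAddCommGroup G] {μ : Measure X}
    {p : ℝ} (hp : 0 < p) (f : X → G) :
    eLpNorm f (ENNReal.ofReal p) μ ^ p = ∫⁻ x, ‖f x‖ₑ ^ p ∂μ := by
  have := eLpNorm_nnreal_pow_eq_lintegral (f := f) (μ := μ) (Real.toNNReal_pos.2 hp).ne'
  rwa [Real.coe_toNNReal p hp.le] at this

lemma exists_eq_smul_eLpNorm_le_one {p : ℝ≥0∞} (hp : p ≠ 0) (f : 𝓢(E, ℝ)) :
    ∃ (a : ℝ) (g : 𝓢(E, ℝ)), f = a • g ∧ ‖a‖ₑ = eLpNorm f p ∧ eLpNorm g p ≤ 1 := by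
  have hfin : eLpNorm f p ≠ ⊤ := (f.memLp p volume).eLpNorm_ne_top
  have ha : ‖(eLpNorm f p).toReal‖ₑ = eLpNorm f p := by
    rw [Real.enorm_of_nonneg ENNReal.toReal_nonneg, ENNReal.ofReal_toReal hfin]
  obtain hzero | hpos := eq_or_ne (eLpNorm f p) 0
  · rw [eLpNorm_eq_zero_iff f.continuous.aestronglyMeasurable hp,
      f.continuous.ae_eq_iff_eq _ continuous_zero] at hzero
    refine ⟨_, 0, ?_, ha, by simp⟩
    ext x
    simp [hzero]
  · have ha_ne : (eLpNorm f p).toReal ≠ 0 := (ENNReal.toReal_pos hpos hfin).ne'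
    refine ⟨_, (eLpNorm f p).toReal⁻¹ • f, ?_, ha, ?_⟩
    · ext x
      simp [ha_ne]
    refine (eLpNorm_const_smul_le (f := f)).trans_eq ?_
    rw [enorm_inv ha_ne, ha, ENNReal.inv_mul_cancel hpos hfin]

lemma lintegral_lintegral_sum_const_mul {X Y ι : Type*} [MeasurableSpace X] [MeasurableSpace Y]
    {μ : Measure X} {ν : Measure Y} [SFinite ν] [Fintype ι] (c : ι → ℝ≥0∞)
    {F : ι → X → Y → ℝ≥0∞} (hF : ∀ i, Measurable fun p : X × Y ↦ F i p.1 p.2) :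
    ∫⁻ x, ∫⁻ y, ∑ i, c i * F i x y ∂ν ∂μ = ∑ i, c i * ∫⁻ x, ∫⁻ y, F i x y ∂ν ∂μ := by
  have hx (i : ι) (x : X) : Measurable (F i x) := (hF i).comp measurable_prodMk_left
  have hy (i : ι) : Measurable fun x ↦ ∫⁻ y, F i x y ∂ν := (hF i).lintegral_prod_right'
  simp_rw [fun x ↦ lintegral_finsetSum (μ := ν) Finset.univ fun i _ ↦ (hx i x).const_mul (c i),
    fun x i ↦ lintegral_const_mul (μ := ν) (c i) (hx i x)]
  rw [lintegral_finsetSum _ fun i _ ↦ (hy i).const_mul (c i)]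
  simp_rw [lintegral_const_mul _ (hy _)]

section BilinearEstimate

variable {p q : ℝ}

lemma exists_lintegral_enorm_fderiv_heat_mul_le_of_eLpNorm_le_one (hpq : p.HolderConjugate q) :
    ∃ C : ℝ≥0, ∀ f g : 𝓢(E, ℝ), eLpNorm f (ENNReal.ofReal p) ≤ 1 →
      eLpNorm g (ENNReal.ofReal q) ≤ 1 → ∀ T,
        ∫⁻ t in Ioc 0 T, ∫⁻ x, ‖fderiv ℝ (heat t f) x‖ₑ * ‖fderiv ℝ (heat t g) x‖ₑ ≤ C := by
  obtain ⟨r, hr, hr_lt⟩ := exists_between (lt_min hpq.lt hpq.symm.lt)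
  obtain ⟨hrp, hrq⟩ := lt_min_iff.1 hr_lt
  have hexp : r / p + r / q = r := by
    rw [div_eq_mul_inv, div_eq_mul_inv, ← mul_add, hpq.inv_add_inv_eq_one, mul_one]
  refine ⟨(2 * (1 + bellmanConst (r / p) r) + 2 * (1 + bellmanConst (r / q) r)).toNNReal * 3,
    fun f g hf hg T ↦ ?_⟩
  obtain ⟨h, Hf, Hg, hint⟩ := exists_isPowerMajorant f g (one_pos.trans hr) hrp.le hrq.le
  refine (Hf.lintegral_enorm_fderiv_heat_mul_le Hg hr hexp T).trans ?_
  rw [hint, ← eLpNorm_ofReal_rpow hpq.pos, ← eLpNorm_ofReal_rpow hpq.symm.pos, ENNReal.coe_mul]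
  refine mul_le_mul_right ?_ _
  calc _ ≤ (1 : ℝ≥0∞) + 1 + 1 := by
        gcongr
        · exact ENNReal.rpow_le_one hf hpq.nonneg
        · exact ENNReal.rpow_le_one hg hpq.symm.nonneg
    _ = _ := by norm_num

theorem exists_lintegral_enorm_fderiv_heat_mul_le (hpq : p.HolderConjugate q) :
    ∃ C : ℝ≥0, ∀ (f g : 𝓢(E, ℝ)) (T : ℝ),
      ∫⁻ t in Ioc 0 T, ∫⁻ x, ‖fderiv ℝ (heat t f) x‖ₑ * ‖fderiv ℝ (heat t g) x‖ₑ ≤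
        C * eLpNorm f (ENNReal.ofReal p) * eLpNorm g (ENNReal.ofReal q) := by
  obtain ⟨C, hC⟩ := exists_lintegral_enorm_fderiv_heat_mul_le_of_eLpNorm_le_one (E := E) hpq
  refine ⟨C, fun f g T ↦ ?_⟩
  obtain ⟨a, f₁, hf, ha, hf₁⟩ :=
    exists_eq_smul_eLpNorm_le_one (ENNReal.ofReal_pos.2 hpq.pos).ne' f
  obtain ⟨b, g₁, hg, hb, hg₁⟩ :=
    exists_eq_smul_eLpNorm_le_one (ENNReal.ofReal_pos.2 hpq.symm.pos).ne' g
  rw [← ha, ← hb, hf, hg]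
  simp_rw [fderiv_heat_smul, enorm_smul, mul_mul_mul_comm ‖a‖ₑ]
  simp_rw [lintegral_const_mul' (‖a‖ₑ * ‖b‖ₑ) _ (ENNReal.mul_ne_top enorm_ne_top enorm_ne_top)]
  rw [mul_assoc (C : ℝ≥0∞), mul_comm (C : ℝ≥0∞)]
  exact mul_le_mul_right (hC f₁ g₁ hf₁ hg₁ T) _

lemma enorm_heat_lineDerivOp_le (f : 𝓢(E, ℝ)) (t : ℝ) (x v : E) :
    ‖heat t (∂_{v} f) x‖ₑ ≤ ‖v‖ₑ * ‖fderiv ℝ (heat t f) x‖ₑ := by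
  rw [← fderiv_heat_apply, mul_comm]
  exact (fderiv ℝ (heat t f) x).le_opENorm v

lemma lintegral_enorm_heat_sum_lineDerivOp_mul_le {ι : Type*} [Fintype ι] (e : ι → E)
    (f : ι → 𝓢(E, ℝ)) (g : 𝓢(E, ℝ)) (v : E) (T : ℝ) :
    ∫⁻ t in Ioc 0 T, ∫⁻ x, ‖heat t (∑ i, ∂_{e i} (f i)) x * heat t (∂_{v} g) x‖ₑ ≤
      ∑ i, ‖e i‖ₑ * ‖v‖ₑ *
        ∫⁻ t in Ioc 0 T, ∫⁻ x, ‖fderiv ℝ (heat t (f i)) x‖ₑ * ‖fderiv ℝ (heat t g) x‖ₑ := by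
  have hcont (f : 𝓢(E, ℝ)) : Continuous fun p : ℝ × E ↦ ‖fderiv ℝ (heat p.1 f) p.2‖ₑ :=
    Continuous.enorm (by fun_prop)
  rw [← lintegral_lintegral_sum_const_mul _ fun i ↦
    (hcont (f i)).measurable.mul (hcont g).measurable]
  refine lintegral_mono fun t ↦ lintegral_mono fun x ↦ ?_
  rw [enorm_mul, heat_sum_apply]
  refine (mul_le_mul_left (enorm_sum_le _ _) _).trans ?_
  rw [Finset.sum_mul]
  refine Finset.sum_le_sum fun i _ ↦ ?_
  rw [mul_mul_mul_comm]
  exact mul_le_mul' (enorm_heat_lineDerivOp_le _ _ _ _) (enorm_heat_lineDerivOp_le _ _ _ _)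

theorem exists_enorm_integral_lineDerivOp_mul_le (hpq : p.HolderConjugate q) :
    ∃ C : ℝ≥0, ∀ {ι : Type*} [Fintype ι] (e : ι → E) (f : ι → 𝓢(E, ℝ)) (w g : 𝓢(E, ℝ)) (v : E),
      Δ w = ∑ i, ∂_{e i} (f i) → ‖∫ x, ∂_{v} w x * g x‖ₑ ≤
        C * ‖v‖ₑ * (∑ i, ‖e i‖ₑ * eLpNorm (f i) (ENNReal.ofReal p)) *
          eLpNorm g (ENNReal.ofReal q) := by
  obtain ⟨C, hC⟩ := exists_lintegral_enorm_fderiv_heat_mul_le (E := E) hpq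
  refine ⟨C, fun e f w g v hw ↦ enorm_integral_lineDerivOp_mul_le w g v fun T _ ↦ ?_⟩
  rw [hw]
  refine (lintegral_enorm_heat_sum_lineDerivOp_mul_le e f g v T).trans ?_
  rw [Finset.mul_sum, Finset.sum_mul]
  refine Finset.sum_le_sum fun i _ ↦ (mul_le_mul_right (hC (f i) g T) _).trans_eq ?_
  ring

end BilinearEstimate

section Duality

lemma enorm_integral_mul_le_of_forall_schwartzMap {μ : Measure E} [μ.HasTemperateGrowth]
    [IsFiniteMeasureOnCompacts μ] {p q : ℝ≥0∞} [p.HolderConjugate q] (hq : q ≠ ⊤) {φ g : E → ℝ}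
    (hφ : MemLp φ p μ) (hg : MemLp g q μ) {M : ℝ≥0∞} (hM : M ≠ ⊤)
    (h : ∀ f : 𝓢(E, ℝ), ‖∫ x, φ x * f x ∂μ‖ₑ ≤ M * eLpNorm f q μ) :
    ‖∫ x, φ x * g x ∂μ‖ₑ ≤ M * eLpNorm g q μ := by
  have : Fact (1 ≤ p) := ⟨ENNReal.HolderConjugate.one_le p q⟩
  have : Fact (1 ≤ q) := ⟨ENNReal.HolderConjugate.one_le q p⟩
  let pairing := (ContinuousLinearMap.mul ℝ ℝ).lpPairing μ p q (hφ.toLp φ)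
  have pairing_toLp {f : E → ℝ} (hf : MemLp f q μ) :
      pairing (hf.toLp f) = ∫ x, φ x * f x ∂μ := by
    rw [ContinuousLinearMap.lpPairing_eq_integral]
    refine integral_congr_ae ?_
    filter_upwards [hφ.coeFn_toLp, hf.coeFn_toLp] with x hφx hfx
    rw [hφx, hfx, ContinuousLinearMap.mul_apply']
  suffices ∀ G : Lp ℝ q μ, ‖pairing G‖ₑ ≤ M * ‖G‖ₑ by
    simpa only [pairing_toLp, Lp.enorm_toLp] using this (hg.toLp g)
  intro G
  refine (SchwartzMap.denseRange_toLpCLM hq).induction_on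
    (p := fun G ↦ ‖pairing G‖ₑ ≤ M * ‖G‖ₑ) G ?_ fun f ↦ ?_
  · exact isClosed_le pairing.continuous.enorm (ENNReal.continuous_const_mul hM |>.comp
      continuous_enorm)
  · have hf := f.memLp q μ
    change ‖pairing (hf.toLp f)‖ₑ ≤ M * ‖hf.toLp f‖ₑ
    rw [pairing_toLp, Lp.enorm_toLp]
    exact h f

lemma norm_mul_norm_rpow_sub_two (a : ℝ) {p : ℝ} (hp : p ≠ 1) :
    ‖a * ‖a‖ ^ (p - 2)‖ = ‖a‖ ^ (p - 1) := by
  rw [norm_mul, Real.norm_of_nonneg (Real.rpow_nonneg (norm_nonneg a) _),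
    ← Real.rpow_one_add' (norm_nonneg a) fun h ↦ hp (by linarith)]
  ring_nf

lemma mul_mul_norm_rpow_sub_two (a : ℝ) {p : ℝ} (hp : p ≠ 0) :
    a * (a * ‖a‖ ^ (p - 2)) = ‖a‖ ^ p := by
  rw [← mul_assoc, ← sq, ← sq_abs, ← Real.norm_eq_abs, ← Real.rpow_natCast,
    ← Real.rpow_add' (norm_nonneg a) (by simpa using hp)]
  simp

section

variable {X : Type*} [MeasurableSpace X] {μ : Measure X} {p q : ℝ} {φ : X → ℝ}

lemma exists_enorm_integral_mul_eq (hpq : p.HolderConjugate q)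
    (hφ : MemLp φ (ENNReal.ofReal p) μ) :
    ∃ g : X → ℝ, MemLp g (ENNReal.ofReal q) μ ∧
      eLpNorm g (ENNReal.ofReal q) μ = eLpNorm φ (ENNReal.ofReal p) μ ^ (p - 1) ∧
      ‖∫ x, φ x * g x ∂μ‖ₑ = eLpNorm φ (ENNReal.ofReal p) μ ^ p := by
  let g (x : X) : ℝ := φ x * ‖φ x‖ ^ (p - 2)
  have enorm_g (x : X) : ‖g x‖ₑ ^ q = ‖φ x‖ₑ ^ p := by
    rw [← enorm_norm, norm_mul_norm_rpow_sub_two _ hpq.lt.ne',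
      Real.enorm_rpow_of_nonneg (norm_nonneg _) hpq.sub_one_pos.le, enorm_norm,
      ← ENNReal.rpow_mul, hpq.sub_one_mul_conj]
  have eLpNorm_g :
      eLpNorm g (ENNReal.ofReal q) μ = eLpNorm φ (ENNReal.ofReal p) μ ^ (p - 1) := by
    rw [← ENNReal.rpow_rpow_inv hpq.symm.ne_zero (eLpNorm g _ μ), eLpNorm_ofReal_rpow hpq.symm.pos]
    simp_rw [enorm_g]
    rw [← eLpNorm_ofReal_rpow hpq.pos, ← ENNReal.rpow_mul, ← div_eq_mul_inv,
      hpq.div_conj_eq_sub_one]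
  refine ⟨g, ⟨hφ.1.mul (hφ.1.norm.aemeasurable.pow_const _).aestronglyMeasurable, ?_⟩,
    eLpNorm_g, ?_⟩
  · rw [eLpNorm_g]
    exact (ENNReal.rpow_ne_top_of_nonneg hpq.sub_one_pos.le hφ.eLpNorm_ne_top).lt_top
  · have hint : Integrable (fun x ↦ ‖φ x‖ ^ p) μ := by
      simpa [hpq.nonneg] using
        hφ.integrable_norm_rpow (by simpa using hpq.pos) ENNReal.ofReal_ne_top
    simp_rw [g, mul_mul_norm_rpow_sub_two _ hpq.ne_zero]
    rw [Real.enorm_of_nonneg (by positivity), ofReal_integral_eq_lintegral_ofReal hint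
      (.of_forall fun x ↦ by positivity), eLpNorm_ofReal_rpow hpq.pos]
    simp_rw [← ENNReal.ofReal_rpow_of_nonneg (norm_nonneg _) hpq.nonneg, ofReal_norm]

lemma eLpNorm_le_of_forall_enorm_integral_mul_le (hpq : p.HolderConjugate q)
    (hφ : MemLp φ (ENNReal.ofReal p) μ) {M : ℝ≥0∞}
    (h : ∀ g : X → ℝ, MemLp g (ENNReal.ofReal q) μ →
      ‖∫ x, φ x * g x ∂μ‖ₑ ≤ M * eLpNorm g (ENNReal.ofReal q) μ) :
    eLpNorm φ (ENNReal.ofReal p) μ ≤ M := by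
  obtain hzero | hpos := eq_or_ne (eLpNorm φ (ENNReal.ofReal p) μ) 0
  · exact hzero.trans_le zero_le
  obtain ⟨g, hg, hnorm, hpairing⟩ := exists_enorm_integral_mul_eq hpq hφ
  have hfin := hφ.eLpNorm_ne_top
  refine (ENNReal.mul_le_mul_iff_left (by simp [hpos, hfin])
    (ENNReal.rpow_ne_top_of_nonneg hpq.sub_one_pos.le hfin)).1 ?_
  calc eLpNorm φ (ENNReal.ofReal p) μ * eLpNorm φ (ENNReal.ofReal p) μ ^ (p - 1)
    _ = eLpNorm φ (ENNReal.ofReal p) μ ^ p := by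
      nth_rw 1 [← ENNReal.rpow_one (eLpNorm φ _ μ)]
      rw [← ENNReal.rpow_add _ _ hpos hfin, add_sub_cancel]
    _ = ‖∫ x, φ x * g x ∂μ‖ₑ := hpairing.symm
    _ ≤ M * eLpNorm φ (ENNReal.ofReal p) μ ^ (p - 1) := hnorm ▸ h g hg

end

end Duality

theorem exists_eLpNorm_lineDerivOp_le {p : ℝ} (hp : 1 < p) :
    ∃ C : ℝ≥0, ∀ {ι : Type*} [Fintype ι] (e : ι → E) (f : ι → 𝓢(E, ℝ)) (w : 𝓢(E, ℝ)) (v : E),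
      Δ w = ∑ i, ∂_{e i} (f i) → eLpNorm (fun x ↦ ∂_{v} w x) (ENNReal.ofReal p) ≤
        C * ‖v‖ₑ * ∑ i, ‖e i‖ₑ * eLpNorm (f i) (ENNReal.ofReal p) := by
  have hpq := Real.HolderConjugate.conjExponent hp
  have := hpq.ennrealOfReal
  obtain ⟨C, hC⟩ := exists_enorm_integral_lineDerivOp_mul_le (E := E) hpq
  refine ⟨C, fun e f w v hw ↦ ?_⟩
  have hderiv := (∂_{v} w : 𝓢(E, ℝ)).memLp (ENNReal.ofReal p) volume
  have hfin : C * ‖v‖ₑ * ∑ i, ‖e i‖ₑ * eLpNorm (f i) (ENNReal.ofReal p) ≠ ⊤ :=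
    ENNReal.mul_ne_top (ENNReal.mul_ne_top ENNReal.coe_ne_top enorm_ne_top) <|
      ENNReal.sum_ne_top.2 fun i _ ↦
        ENNReal.mul_ne_top enorm_ne_top ((f i).memLp _ volume).eLpNorm_ne_top
  exact eLpNorm_le_of_forall_enorm_integral_mul_le hpq hderiv fun g hg ↦
    enorm_integral_mul_le_of_forall_schwartzMap ENNReal.ofReal_ne_top hderiv hg hfin fun f' ↦
      hC e f w f' v hw

lemma eLpNorm_add_eLpNorm_le_of_le_mul {X G : Type*} [MeasurableSpace X] [NormedAddCommGroup G]
    {μ : Measure X} {p : ℝ≥0∞} (hp : 1 ≤ p) {f g : X → G} (hf : AEStronglyMeasurable f μ)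
    (hg : AEStronglyMeasurable g μ) {C : ℝ≥0∞} (h : eLpNorm f p μ ≤ C * eLpNorm (f + g) p μ) :
    eLpNorm f p μ + eLpNorm g p μ ≤ (2 * C + 1) * eLpNorm (f + g) p μ := by
  have hg_le : eLpNorm g p μ ≤ eLpNorm (f + g) p μ + eLpNorm f p μ := by
    simpa only [add_sub_cancel_left] using eLpNorm_sub_le (hf.add hg) hf hp
  calc eLpNorm f p μ + eLpNorm g p μ
    _ ≤ C * eLpNorm (f + g) p μ + (eLpNorm (f + g) p μ + C * eLpNorm (f + g) p μ) :=
      add_le_add h (hg_le.trans (by gcongr))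
    _ = (2 * C + 1) * eLpNorm (f + g) p μ := by ring

section PiLp

variable {X ι : Type*} [MeasurableSpace X] {μ : Measure X} [Fintype ι] {β : ι → Type*}
  [∀ i, NormedAddCommGroup (β i)] {p r : ℝ≥0∞} [Fact (1 ≤ r)]

lemma eLpNorm_apply_le (f : X → PiLp r β) (i : ι) :
    eLpNorm (fun x ↦ f x i) p μ ≤ eLpNorm f p μ :=
  eLpNorm_mono fun x ↦ PiLp.norm_apply_le (f x) i

lemma norm_piLp_le_sum (x : PiLp r β) : ‖x‖ ≤ ∑ i, ‖x i‖ := by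
  classical
  have hx : x = ∑ i, PiLp.single r i (x i) := by
    ext i
    simp
  calc ‖x‖ = ‖∑ i, PiLp.single r i (x i)‖ := congrArg _ hx
    _ ≤ ∑ i, ‖x i‖ := (norm_sum_le _ _).trans_eq (by simp_rw [PiLp.norm_single])

lemma eLpNorm_piLp_le_sum (hp : 1 ≤ p) {f : X → PiLp r β}
    (hf : ∀ i, AEStronglyMeasurable (fun x ↦ f x i) μ) :
    eLpNorm f p μ ≤ ∑ i, eLpNorm (fun x ↦ f x i) p μ := by
  calc eLpNorm f p μ ≤ eLpNorm (∑ i, fun x ↦ ‖f x i‖) p μ :=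
        eLpNorm_mono_real fun x ↦ (norm_piLp_le_sum (f x)).trans_eq (by simp)
    _ ≤ ∑ i, eLpNorm (fun x ↦ ‖f x i‖) p μ := eLpNorm_sum_le (fun i _ ↦ (hf i).norm) hp
    _ = ∑ i, eLpNorm (fun x ↦ f x i) p μ := by simp_rw [eLpNorm_norm]

end PiLp

section DivergenceFree

variable {ι : Type*} [Fintype ι]

lemma laplacian_eq_sum_of_sum_lineDerivOp_eq_zero {V : Type*} [NormedAddCommGroup V]
    [InnerProductSpace ℝ V] [FiniteDimensional ℝ V] (b : OrthonormalBasis ι ℝ V)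
    {u : ι → 𝓢(V, ℝ)} (hu : ∑ i, ∂_{b i} (u i) = 0) (k : ι) :
    Δ (u k) = ∑ i, ∂_{b i} (∂_{b i} (u k) + ∂_{b k} (u i)) := by
  have hzero : ∑ i, ∂_{b i} (∂_{b k} (u i)) = 0 := by
    simp_rw [lineDerivOp_comm _ _ (b k)]
    rw [← lineDerivOp_sum, hu, lineDerivOp_zero]
  simp_rw [fun i ↦ lineDerivOp_add (b i) (∂_{b i} (u k)) (∂_{b k} (u i))]
  rw [Finset.sum_add_distrib, hzero, add_zero, SchwartzMap.laplacian_eq_sum b]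

variable (b : OrthonormalBasis ι ℝ E)

lemma exists_eLpNorm_gradient_le_of_sum_lineDerivOp_eq_zero {p : ℝ} (hp : 1 < p) :
    ∃ C : ℝ≥0, ∀ u : ι → 𝓢(E, ℝ), ∑ i, ∂_{b i} (u i) = 0 → ∀ k,
      eLpNorm (fun x ↦ WithLp.toLp 2 fun i ↦ ∂_{b i} (u k) x) (ENNReal.ofReal p) ≤
        C * eLpNorm (fun x ↦ WithLp.toLp 2 fun i ↦ ∂_{b i} (u k) x + ∂_{b k} (u i) x)
          (ENNReal.ofReal p) := by
  obtain ⟨C, hC⟩ := exists_eLpNorm_lineDerivOp_le (E := E) hp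
  refine ⟨Fintype.card ι * (C * Fintype.card ι), fun u hu k ↦ ?_⟩
  let strain (x : E) : EuclideanSpace ℝ ι :=
    WithLp.toLp 2 fun i ↦ ∂_{b i} (u k) x + ∂_{b k} (u i) x
  have component_le (i : ι) : eLpNorm (fun x ↦ ∂_{b i} (u k) x) (ENNReal.ofReal p) ≤
      C * Fintype.card ι * eLpNorm strain (ENNReal.ofReal p) := by
    have enorm_b (j : ι) : ‖b j‖ₑ = 1 := by simp [enorm_eq_nnnorm]
    refine (hC b _ _ (b i) (laplacian_eq_sum_of_sum_lineDerivOp_eq_zero b hu k)).trans ?_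
    simp_rw [enorm_b, one_mul, mul_one, mul_assoc]
    refine mul_le_mul_right ((Finset.sum_le_card_nsmul _ _ _ fun j _ ↦
      eLpNorm_apply_le strain j).trans_eq ?_) _
    rw [nsmul_eq_mul, Finset.card_univ]
  refine (eLpNorm_piLp_le_sum (by simpa using hp.le) fun i ↦
    (∂_{b i} (u k)).continuous.aestronglyMeasurable).trans ?_
  refine (Finset.sum_le_card_nsmul _ _ _ fun i _ ↦ component_le i).trans_eq ?_
  rw [nsmul_eq_mul, Finset.card_univ, ← mul_assoc]
  norm_cast

end DivergenceFree

end HeatFlow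

open LineDeriv SchwartzMap in
theorem grad_add_d3_le_two_strain_e3_general {E ι : Type*} [NormedAddCommGroup E]
    [InnerProductSpace ℝ E] [FiniteDimensional ℝ E] [MeasurableSpace E] [BorelSpace E] [Fintype ι]
    (b : OrthonormalBasis ι ℝ E) {q : ℝ} (hq : 1 < q) :
    ∃ C : ℝ, 0 < C ∧ ∀ u : ι → 𝓢(E, ℝ), ∑ i, ∂_{b i} (u i) = 0 → ∀ k,
      eLpNorm (fun x ↦ WithLp.toLp 2 fun i ↦ ∂_{b i} (u k) x) (ENNReal.ofReal q) volume
          + eLpNorm (fun x ↦ WithLp.toLp 2 fun i ↦ ∂_{b k} (u i) x) (ENNReal.ofReal q) volume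
        ≤ ENNReal.ofReal C *
            eLpNorm (fun x ↦ WithLp.toLp 2 fun i ↦ ∂_{b i} (u k) x + ∂_{b k} (u i) x)
              (ENNReal.ofReal q) volume := by
  obtain ⟨C, hC⟩ := HeatFlow.exists_eLpNorm_gradient_le_of_sum_lineDerivOp_eq_zero b hq
  refine ⟨2 * C + 1, by positivity, fun u hu k ↦ ?_⟩
  have hgrad : Continuous fun x ↦ WithLp.toLp 2 fun i ↦ ∂_{b i} (u k) x := by fun_prop
  have hderiv : Continuous fun x ↦ WithLp.toLp 2 fun i ↦ ∂_{b k} (u i) x := by fun_prop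
  have hC_ofReal : ENNReal.ofReal (2 * C + 1) = 2 * C + 1 := by
    rw [ENNReal.ofReal_add (by positivity) one_pos.le, ENNReal.ofReal_mul zero_le_two]
    simp
  rw [hC_ofReal]
  exact HeatFlow.eLpNorm_add_eLpNorm_le_of_le_mul (by simpa using hq.le)
    hgrad.aestronglyMeasurable hderiv.aestronglyMeasurable (hC u hu k)

lemma pdW_eq_lineDerivOp (u : Fin 3 → SchwartzMap (EuclideanSpace ℝ (Fin 3)) ℝ) (i j : Fin 3)
    (x : EuclideanSpace ℝ (Fin 3)) :
    pdW u i j x = LineDeriv.lineDerivOp (EuclideanSpace.basisFun (Fin 3) ℝ i) (u j) x := by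
  rw [EuclideanSpace.basisFun_apply]
  rfl

lemma two_smul_strainW_mulVec (u : Fin 3 → SchwartzMap (EuclideanSpace ℝ (Fin 3)) ℝ)
    (x : EuclideanSpace ℝ (Fin 3)) :
    ((2 : ℝ) • strainW u x).mulVec ![0, 0, 1] = fun i ↦ pdW u i 2 x + pdW u 2 i x := by
  ext i
  simp [strainW, Matrix.mulVec, dotProduct, Fin.sum_univ_three, mul_div_cancel₀]

/-- For every `1 < q < ∞` there is a constant `C_q > 0` such that for
every divergence-free Schwartz vector field `u : ℝ³ → ℝ³` with strain tensor `S`,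
`‖∇u₃‖_{L^q} + ‖∂₃u‖_{L^q} ≤ C_q ‖2 S e₃‖_{L^q}`. -/
theorem grad_add_d3_le_two_strain_e3 (q : ℝ) (hq1 : 1 < q) :
    ∃ C : ℝ, 0 < C ∧
      ∀ u : Fin 3 → SchwartzMap (EuclideanSpace ℝ (Fin 3)) ℝ,
        (∀ x, ∑ i, pdW u i i x = 0) →
        eLpNorm (fun x => toE3 fun i => pdW u i 2 x) (ENNReal.ofReal q) volume
            + eLpNorm (fun x => toE3 fun i => pdW u 2 i x) (ENNReal.ofReal q) volume
          ≤ ENNReal.ofReal C *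
              eLpNorm (fun x => toE3 (((2 : ℝ) • strainW u x).mulVec ![0, 0, 1]))
                (ENNReal.ofReal q) volume := by
  obtain ⟨C, hC, hle⟩ :=
    grad_add_d3_le_two_strain_e3_general (EuclideanSpace.basisFun (Fin 3) ℝ) hq1
  refine ⟨C, hC, fun u hdiv ↦ ?_⟩
  simp_rw [two_smul_strainW_mulVec, pdW_eq_lineDerivOp] at hdiv ⊢
  exact hle u (by ext x; simpa using hdiv x) 2
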